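/- arXiv:0708.1113 — 3 statements merged into one kernel-verified Lean document; each statement's English description precedes it below -/
import Mathlib

section
/- Fix an integer n ≥ 1. There exist constants C > 0 and δ > 0, depending only on n, such that for every positive definite quadratic form Q on ℝⁿ one has ∫_{{x ∈ ℝⁿ : Q(x) ≤ 1}} ∏_{i=1}^{n} |x_i|^{-1/2} dx ≤ C · exp(−δ·Δ(Q)) · vol({x ∈ ℝⁿ : Q(x) ≤ 1})^{1/2}, where Δ(Q) is the infimum, over all invertible diagonal real n×n matrices D, of log( sup_{‖x‖=1} Q(Dx) / inf_{‖x‖=1} Q(Dx) ), the supremum and infimum being taken over the Euclidean unit sphere. -/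
open MeasureTheory Matrix

/-!
Write `Q x = xᵀ S x` and let `s` be the exponent (`1 / 2` in the theorem). Completing the square
eliminates one variable at a time; the integral of `|t| ^ (-b)` over an interval is at most a
constant times that over the centred interval of the same length, so the integral of
`∏ |x i| ^ (-b)` over `Q ≤ 1` is `O(det S ^ (-(1 - b) / 2))` for every `b < 1`. To gain decay,
apply this with a slightly larger exponent `b = s + ε`. By AM-GM, `∏ (S i i ^ (1/2) * |x i|) ^ ε` is
at most the average over `k` of `(S k k ^ (1/2) * |x k|) ^ (n * ε)`, and if `x k` is the first
variable to be eliminated, the weight `|x k| ^ (n * ε)` contributes a factor `S k k ^ (-n * ε / 2)`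
that cancels the one just introduced. What remains is `det S ^ (-(1 - s) / 2) * h ^ (ε / 2)` with
`h = det S / ∏ S i i`, where the first factor is a multiple of `vol {Q ≤ 1} ^ (1 - s)`.

Finally `h` controls `Δ(Q)`: the diagonal dilation making all diagonal entries of `S` equal to `1`
produces a matrix with trace `n` and determinant `h`, whose eigenvalues therefore lie between
`h / n ^ (n - 1)` and `n`, so `Δ(Q) ≤ log (n ^ n / h)`.
-/

lemma lintegral_Icc_abs_rpow_neg {a σ : ℝ} (ha : a < 1) (hσ : 0 ≤ σ) :
    ∫⁻ t in Set.Icc 0 σ, ENNReal.ofReal (|t| ^ (-a)) = ENNReal.ofReal (σ ^ (1 - a) / (1 - a)) := by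
  have hint : IntegrableOn (fun t : ℝ ↦ t ^ (-a)) (Set.Ioc 0 σ) :=
    (intervalIntegrable_iff_integrableOn_Ioc_of_le hσ).1
      (intervalIntegral.intervalIntegrable_rpow' (by linarith))
  calc ∫⁻ t in Set.Icc 0 σ, ENNReal.ofReal (|t| ^ (-a))
      = ∫⁻ t in Set.Ioc 0 σ, ENNReal.ofReal (|t| ^ (-a)) := setLIntegral_congr Ioc_ae_eq_Icc.symm
    _ = ∫⁻ t in Set.Ioc 0 σ, ENNReal.ofReal (t ^ (-a)) :=
        setLIntegral_congr_fun measurableSet_Ioc fun t ht ↦ by simp only [abs_of_pos ht.1]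
    _ = ENNReal.ofReal (∫ t in 0..σ, t ^ (-a)) := by
        rw [intervalIntegral.integral_of_le hσ, ofReal_integral_eq_lintegral_ofReal hint]
        exact ae_restrict_of_forall_mem measurableSet_Ioc fun t ht ↦ Real.rpow_nonneg ht.1.le _
    _ = ENNReal.ofReal (σ ^ (1 - a) / (1 - a)) := by
        rw [integral_rpow (Or.inl (by linarith)), neg_add_eq_sub, Real.zero_rpow (by linarith),
          sub_zero]

lemma lintegral_closedBall_zero_abs_rpow_neg_le {a σ : ℝ} (ha : a < 1) (hσ : 0 ≤ σ) :
    ∫⁻ t in Metric.closedBall (0 : ℝ) σ, ENNReal.ofReal (|t| ^ (-a)) ≤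
      ENNReal.ofReal (2 / (1 - a) * σ ^ (1 - a)) := by
  have hneg : ∫⁻ t in Set.Icc (-σ) 0, ENNReal.ofReal (|t| ^ (-a)) =
      ∫⁻ t in Set.Icc 0 σ, ENNReal.ofReal (|t| ^ (-a)) := by
    rw [← (Measure.measurePreserving_neg (volume : Measure ℝ)).setLIntegral_comp_preimage
      measurableSet_Icc (by fun_prop)]
    simp only [abs_neg, Set.neg_preimage, Set.neg_Icc, neg_zero, neg_neg]
  have hval : 0 ≤ σ ^ (1 - a) / (1 - a) := div_nonneg (by positivity) (by linarith)
  calc ∫⁻ t in Metric.closedBall (0 : ℝ) σ, ENNReal.ofReal (|t| ^ (-a))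
      = ∫⁻ t in Set.Icc (-σ) 0 ∪ Set.Icc 0 σ, ENNReal.ofReal (|t| ^ (-a)) := by
        rw [Real.closedBall_eq_Icc, zero_sub, zero_add,
          Set.Icc_union_Icc_eq_Icc (neg_nonpos.2 hσ) hσ]
    _ ≤ _ := lintegral_union_le _ _ _
    _ = ENNReal.ofReal (2 / (1 - a) * σ ^ (1 - a)) := by
        rw [hneg, lintegral_Icc_abs_rpow_neg ha hσ, ← ENNReal.ofReal_add hval hval]
        ring_nf

lemma lintegral_closedBall_abs_rpow_neg_le {a σ : ℝ} (ha₀ : 0 ≤ a) (ha₁ : a < 1) (hσ : 0 < σ)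
    (m : ℝ) :
    ∫⁻ t in Metric.closedBall m σ, ENNReal.ofReal (|t| ^ (-a)) ≤
      ENNReal.ofReal (4 / (1 - a) * σ ^ (1 - a)) := by
  set f : ℝ → ENNReal := fun t ↦ ENNReal.ofReal (|t| ^ (-a))
  have hfar : ∀ t ∉ Metric.closedBall (0 : ℝ) σ, f t ≤ ENNReal.ofReal (σ ^ (-a)) := fun t ht ↦ by
    rw [mem_closedBall_zero_iff, Real.norm_eq_abs, not_le] at ht
    exact ENNReal.ofReal_le_ofReal
      (Real.rpow_le_rpow_of_nonpos hσ ht.le (neg_nonpos.2 ha₀))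
  calc ∫⁻ t in Metric.closedBall m σ, f t
      ≤ ∫⁻ t in Metric.closedBall m σ,
          ((Metric.closedBall 0 σ).indicator f t + ENNReal.ofReal (σ ^ (-a))) := by
        refine lintegral_mono fun t ↦ ?_
        by_cases ht : t ∈ Metric.closedBall (0 : ℝ) σ
        · rw [Set.indicator_of_mem ht]
          exact le_self_add
        · exact (hfar t ht).trans le_add_self
    _ = (∫⁻ t in Metric.closedBall m σ, (Metric.closedBall 0 σ).indicator f t) +
          ENNReal.ofReal (σ ^ (-a) * (2 * σ)) := by
        rw [lintegral_add_right _ measurable_const, setLIntegral_const, Real.volume_closedBall,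
          ← ENNReal.ofReal_mul (by positivity)]
    _ ≤ (∫⁻ t in Metric.closedBall 0 σ, f t) + ENNReal.ofReal (σ ^ (-a) * (2 * σ)) := by
        refine add_le_add ((setLIntegral_le_lintegral _ _).trans_eq ?_) le_rfl
        exact lintegral_indicator measurableSet_closedBall f
    _ ≤ ENNReal.ofReal (2 / (1 - a) * σ ^ (1 - a)) + ENNReal.ofReal (2 * σ ^ (1 - a)) := by
        refine add_le_add (lintegral_closedBall_zero_abs_rpow_neg_le ha₁ hσ.le) (le_of_eq ?_)
        rw [sub_eq_neg_add, Real.rpow_add_one hσ.ne']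
        ring_nf
    _ ≤ ENNReal.ofReal (4 / (1 - a) * σ ^ (1 - a)) := by
        have h₁ : 0 < 1 - a := by linarith
        rw [← ENNReal.ofReal_add (by positivity) (by positivity), ← add_mul]
        gcongr
        rw [div_add' _ _ _ h₁.ne']
        gcongr
        linarith

section SchurComplement

variable {K : Type*} [Field K] {n : ℕ}

/-- The Schur complement of the diagonal entry `S j j`, that is, the matrix left over when the
`j`-th variable is eliminated from the form of `S` by completing the square. -/
def schurCompl (S : Matrix (Fin (n + 1)) (Fin (n + 1)) K) (j : Fin (n + 1)) :
    Matrix (Fin n) (Fin n) K :=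
  Matrix.of fun p q ↦ S (j.succAbove p) (j.succAbove q) -
    S (j.succAbove p) j * S j (j.succAbove q) / S j j

/-- The value of the `j`-th coordinate at which the form of `S` is critical when the other
coordinates are held at `y`. -/
def schurCenter (S : Matrix (Fin (n + 1)) (Fin (n + 1)) K) (j : Fin (n + 1)) (y : Fin n → K) : K :=
  -(∑ p, S j (j.succAbove p) * y p) / S j j

lemma det_eq_mul_det_schurCompl (S : Matrix (Fin (n + 1)) (Fin (n + 1)) K) {j : Fin (n + 1)}
    (hj : S j j ≠ 0) : S.det = S j j * (schurCompl S j).det := by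
  let c : Fin (n + 1) → K := fun i ↦ if i = j then 0 else S i j / S j j
  let B : Matrix (Fin (n + 1)) (Fin (n + 1)) K := Matrix.of fun i l ↦ S i l - c i * S j l
  have hBrow : ∀ l, B j l = S j l := fun l ↦ by simp [B, c]
  have hBcol : ∀ i ≠ j, B i j = 0 := fun i hi ↦ by simp [B, c, hi, hj]
  have hBsub : B.submatrix j.succAbove j.succAbove = schurCompl S j := by
    ext p q
    simp [B, c, schurCompl, Fin.succAbove_ne, div_mul_eq_mul_div]
  calc S.det = B.det :=
        det_eq_of_forall_row_eq_smul_add_const c j (by simp [c]) fun i l ↦ by simp [B, c]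
    _ = (-1) ^ (j + j : ℕ) * B j j * (B.submatrix j.succAbove j.succAbove).det := by
        rw [det_succ_column B j]
        exact Finset.sum_eq_single j (fun i _ hi ↦ by simp [hBcol i hi]) (by simp)
    _ = S j j * (schurCompl S j).det := by
        rw [hBsub, hBrow, (Even.add_self (j : ℕ)).neg_one_pow, one_mul]

lemma dotProduct_mulVec_insertNth {S : Matrix (Fin (n + 1)) (Fin (n + 1)) K} (hS : S.IsSymm)
    {j : Fin (n + 1)} (hj : S j j ≠ 0) (t : K) (y : Fin n → K) :
    (j.insertNth t y : Fin (n + 1) → K) ⬝ᵥ S *ᵥ j.insertNth t y =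
      S j j * (t - schurCenter S j y) ^ 2 + y ⬝ᵥ schurCompl S j *ᵥ y := by
  set L := ∑ p, S j (j.succAbove p) * y p with hL
  set P := ∑ p, y p * ∑ q, S (j.succAbove p) (j.succAbove q) * y q with hP
  have hsymm : ∀ p, S (j.succAbove p) j = S j (j.succAbove p) := fun p ↦ hS.apply _ _
  have hcross : ∑ p, y p * (S j (j.succAbove p) * t) = t * L := by
    rw [hL, Finset.mul_sum]
    exact Finset.sum_congr rfl fun p _ ↦ by ring
  have hfull : (j.insertNth t y : Fin (n + 1) → K) ⬝ᵥ S *ᵥ j.insertNth t y =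
      t * (S j j * t + L) + (t * L + P) := by
    simp only [dotProduct, mulVec, Fin.sum_univ_succAbove _ j, Fin.insertNth_apply_same,
      Fin.insertNth_apply_succAbove, hsymm, mul_add, Finset.sum_add_distrib, hcross, hL, hP]
  have hrow : ∀ p, (schurCompl S j *ᵥ y) p =
      ∑ q, S (j.succAbove p) (j.succAbove q) * y q - S j (j.succAbove p) * (L / S j j) := fun p ↦ by
    simp only [mulVec, dotProduct, schurCompl, of_apply, hsymm, sub_mul, Finset.sum_sub_distrib, hL,
      Finset.sum_div, Finset.mul_sum]
    exact congrArg _ (Finset.sum_congr rfl fun q _ ↦ by ring)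
  have hcompl : y ⬝ᵥ schurCompl S j *ᵥ y = P - L * (L / S j j) := by
    simp only [dotProduct, hrow, mul_sub, Finset.sum_sub_distrib]
    rw [← hP, hL, Finset.sum_mul]
    exact congrArg _ (Finset.sum_congr rfl fun p _ ↦ by ring)
  rw [hfull, hcompl, schurCenter, ← hL]
  field_simp
  ring

end SchurComplement

lemma posDef_schurCompl {n : ℕ} {S : Matrix (Fin (n + 1)) (Fin (n + 1)) ℝ} (hS : S.PosDef)
    (j : Fin (n + 1)) : (schurCompl S j).PosDef := by
  have hsymm : S.IsSymm := isHermitian_iff_isSymm.1 hS.isHermitian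
  refine .of_dotProduct_mulVec_pos (isHermitian_iff_isSymm.2 ?_) fun y hy ↦ ?_
  · ext p q
    simp only [transpose_apply, schurCompl, of_apply, hsymm.apply, mul_comm]
  · have hne : (j.insertNth (schurCenter S j y) y : Fin (n + 1) → ℝ) ≠ 0 := fun h0 ↦
      hy (funext fun p ↦ by simpa using congrFun h0 (j.succAbove p))
    simpa [dotProduct_mulVec_insertNth hsymm hS.diag_pos.ne'] using hS.dotProduct_mulVec_pos hne

/-- The solid ellipsoid cut out by the quadratic form of `S`, i.e. `Q ≤ 1` for
`Q x = x ⬝ᵥ S *ᵥ x`. -/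
def ellipsoid {ι : Type*} [Fintype ι] (S : Matrix ι ι ℝ) : Set (ι → ℝ) :=
  {x | x ⬝ᵥ S *ᵥ x ≤ 1}

lemma measurableSet_ellipsoid {ι : Type*} [Fintype ι] (S : Matrix ι ι ℝ) :
    MeasurableSet (ellipsoid S) :=
  measurableSet_le (by unfold dotProduct mulVec dotProduct; fun_prop) measurable_const

lemma abs_le_rpow_neg_half_of_mul_sq_le_one {d u : ℝ} (hd : 0 < d) (h : d * u ^ 2 ≤ 1) :
    |u| ≤ d ^ (-(1 / 2) : ℝ) := by
  rw [Real.rpow_neg hd.le, ← Real.sqrt_eq_rpow, ← Real.sqrt_inv]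
  exact Real.abs_le_sqrt ((le_inv_mul_iff₀ hd).2 h |>.trans_eq (mul_one _))

lemma mem_of_insertNth_mem_ellipsoid {n : ℕ} {S : Matrix (Fin (n + 1)) (Fin (n + 1)) ℝ}
    (hS : S.PosDef) {j : Fin (n + 1)} {t : ℝ} {y : Fin n → ℝ}
    (h : j.insertNth t y ∈ ellipsoid S) :
    t ∈ Metric.closedBall (schurCenter S j y) (S j j ^ (-(1 / 2) : ℝ)) ∧
      y ∈ ellipsoid (schurCompl S j) := by
  have hd : 0 < S j j := hS.diag_pos
  have hsum : S j j * (t - schurCenter S j y) ^ 2 + y ⬝ᵥ schurCompl S j *ᵥ y ≤ 1 := by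
    rw [← dotProduct_mulVec_insertNth (isHermitian_iff_isSymm.1 hS.isHermitian) hd.ne']
    exact h
  have hsq : 0 ≤ S j j * (t - schurCenter S j y) ^ 2 := by positivity
  have hcompl : 0 ≤ y ⬝ᵥ schurCompl S j *ᵥ y := by
    simpa using (posDef_schurCompl hS j).posSemidef.dotProduct_mulVec_nonneg y
  refine ⟨?_, show y ⬝ᵥ schurCompl S j *ᵥ y ≤ 1 by linarith⟩
  rw [Metric.mem_closedBall, Real.dist_eq]
  exact abs_le_rpow_neg_half_of_mul_sq_le_one hd (by linarith)

lemma lintegral_ellipsoid_mul_removeNth_le {n : ℕ} {S : Matrix (Fin (n + 1)) (Fin (n + 1)) ℝ}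
    (hS : S.PosDef) (j : Fin (n + 1)) {f : ℝ → ENNReal} (hf : Measurable f)
    {g : (Fin n → ℝ) → ENNReal} (hg : Measurable g) {A : ENNReal}
    (hA : ∀ m, ∫⁻ t in Metric.closedBall m (S j j ^ (-(1 / 2) : ℝ)), f t ≤ A) :
    ∫⁻ x in ellipsoid S, f (x j) * g (j.removeNth x) ≤
      A * ∫⁻ y in ellipsoid (schurCompl S j), g y := by
  set σ := S j j ^ (-(1 / 2) : ℝ)
  set F : (Fin (n + 1) → ℝ) → ENNReal :=
    (ellipsoid S).indicator fun x ↦ f (x j) * g (j.removeNth x) with hF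
  set G : (Fin n → ℝ) → ENNReal := (ellipsoid (schurCompl S j)).indicator g with hG
  have hFmeas : Measurable F :=
    .indicator (by unfold Fin.removeNth; fun_prop) (measurableSet_ellipsoid S)
  have hsplit := (volume_preserving_piFinSuccAbove (fun _ : Fin (n + 1) ↦ ℝ) j).symm
  have hslice : ∀ t y, F (j.insertNth t y) ≤
      (Metric.closedBall (schurCenter S j y) σ).indicator f t * G y := fun t y ↦ by
    by_cases h : j.insertNth t y ∈ ellipsoid S
    · obtain ⟨ht, hy⟩ := mem_of_insertNth_mem_ellipsoid hS h
      rw [hF, hG, Set.indicator_of_mem h, Set.indicator_of_mem ht, Set.indicator_of_mem hy,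
        Fin.insertNth_apply_same, Fin.removeNth_insertNth]
    · rw [hF, Set.indicator_of_notMem h]
      exact zero_le
  calc ∫⁻ x in ellipsoid S, f (x j) * g (j.removeNth x)
      = ∫⁻ x, F x := (lintegral_indicator (measurableSet_ellipsoid S) _).symm
    _ = ∫⁻ p : ℝ × (Fin n → ℝ), F (j.insertNth p.1 p.2) := (hsplit.lintegral_comp hFmeas).symm
    _ = ∫⁻ y, ∫⁻ t, F (j.insertNth t y) :=
        lintegral_prod_symm' _ (hFmeas.comp hsplit.measurable)
    _ ≤ ∫⁻ y, A * G y := by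
        refine lintegral_mono fun y ↦ (lintegral_mono fun t ↦ hslice t y).trans ?_
        rw [lintegral_mul_const _ (hf.indicator measurableSet_closedBall),
          lintegral_indicator measurableSet_closedBall]
        exact mul_le_mul_left (hA _) _
    _ = A * ∫⁻ y in ellipsoid (schurCompl S j), g y := by
        rw [lintegral_const_mul _ (hg.indicator (measurableSet_ellipsoid _)),
          lintegral_indicator (measurableSet_ellipsoid _)]

lemma lintegral_closedBall_diag_abs_rpow_neg_le {n : ℕ} {S : Matrix (Fin n) (Fin n) ℝ}
    (hS : S.PosDef) (j : Fin n) {a : ℝ} (ha₀ : 0 ≤ a) (ha₁ : a < 1) (m : ℝ) :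
    ∫⁻ t in Metric.closedBall m (S j j ^ (-(1 / 2) : ℝ)), ENNReal.ofReal (|t| ^ (-a)) ≤
      ENNReal.ofReal (4 / (1 - a) * S j j ^ (-((1 - a) / 2))) := by
  have hd : 0 < S j j := hS.diag_pos
  refine (lintegral_closedBall_abs_rpow_neg_le ha₀ ha₁ (by positivity) m).trans_eq ?_
  rw [← Real.rpow_mul hd.le]
  ring_nf

lemma lintegral_ellipsoid_prod_abs_rpow_neg_le {b : ℝ} (hb₀ : 0 ≤ b) (hb₁ : b < 1) {n : ℕ}
    {S : Matrix (Fin n) (Fin n) ℝ} (hS : S.PosDef) :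
    ∫⁻ x in ellipsoid S, ∏ i, ENNReal.ofReal (|x i| ^ (-b)) ≤
      ENNReal.ofReal ((4 / (1 - b)) ^ n * S.det ^ (-((1 - b) / 2))) := by
  have : 0 < 1 - b := by linarith
  induction n with
  | zero =>
    have huniv : volume (ellipsoid S) ≤ 1 :=
      (measure_mono (Set.subset_univ _)).trans_eq (by simp [volume_pi])
    simpa using huniv
  | succ n ih =>
    have hd : 0 < S 0 0 := hS.diag_pos
    have hS' := posDef_schurCompl hS 0
    calc ∫⁻ x in ellipsoid S, ∏ i, ENNReal.ofReal (|x i| ^ (-b))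
        = ∫⁻ x in ellipsoid S, ENNReal.ofReal (|x 0| ^ (-b)) *
            ∏ i, ENNReal.ofReal (|Fin.removeNth 0 x i| ^ (-b)) := by
          simp only [Fin.prod_univ_succAbove _ 0, Fin.removeNth_apply]
      _ ≤ ENNReal.ofReal (4 / (1 - b) * S 0 0 ^ (-((1 - b) / 2))) *
            ∫⁻ y in ellipsoid (schurCompl S 0), ∏ i, ENNReal.ofReal (|y i| ^ (-b)) :=
          lintegral_ellipsoid_mul_removeNth_le hS 0 (by fun_prop) (by fun_prop)
            (lintegral_closedBall_diag_abs_rpow_neg_le hS 0 hb₀ hb₁)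
      _ ≤ ENNReal.ofReal (4 / (1 - b) * S 0 0 ^ (-((1 - b) / 2))) *
            ENNReal.ofReal ((4 / (1 - b)) ^ n * (schurCompl S 0).det ^ (-((1 - b) / 2))) := by
          gcongr
          exact ih hS'
      _ = ENNReal.ofReal ((4 / (1 - b)) ^ (n + 1) * S.det ^ (-((1 - b) / 2))) := by
          rw [← ENNReal.ofReal_mul (by positivity), det_eq_mul_det_schurCompl S hd.ne',
            Real.mul_rpow hd.le hS'.det_pos.le]
          ring_nf

/-- Eliminating the `k`-th variable first is what makes the weight `|x k| ^ c` produce the diagonal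
entry `S k k` rather than a later pivot. -/
lemma lintegral_ellipsoid_mul_prod_abs_rpow_neg_le {b c : ℝ} (hc : 0 ≤ c) (hcb : c ≤ b)
    (hb₁ : b < 1) {n : ℕ} {S : Matrix (Fin n) (Fin n) ℝ} (hS : S.PosDef) (k : Fin n) :
    ∫⁻ x in ellipsoid S, ENNReal.ofReal (|x k| ^ c) * ∏ i, ENNReal.ofReal (|x i| ^ (-b)) ≤
      ENNReal.ofReal ((4 / (1 - b)) ^ n * S.det ^ (-((1 - b) / 2)) * S k k ^ (-(c / 2))) := by
  obtain ⟨n, rfl⟩ : ∃ m, n = m + 1 := ⟨n - 1, by have := k.pos; lia⟩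
  have hd : 0 < S k k := hS.diag_pos
  have hS' := posDef_schurCompl hS k
  have : 0 < 1 - b := by linarith
  have hmerge : ∀ u : ℝ, ENNReal.ofReal (|u| ^ c) * ENNReal.ofReal (|u| ^ (-b)) ≤
      ENNReal.ofReal (|u| ^ (-(b - c))) := fun u ↦ by
    rw [← ENNReal.ofReal_mul (by positivity), neg_sub, sub_eq_add_neg]
    exact ENNReal.ofReal_le_ofReal (Real.le_rpow_add (abs_nonneg u) _ _)
  calc ∫⁻ x in ellipsoid S, ENNReal.ofReal (|x k| ^ c) * ∏ i, ENNReal.ofReal (|x i| ^ (-b))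
      ≤ ∫⁻ x in ellipsoid S, ENNReal.ofReal (|x k| ^ (-(b - c))) *
          ∏ i, ENNReal.ofReal (|k.removeNth x i| ^ (-b)) := by
        refine lintegral_mono fun x ↦ ?_
        simp only [Fin.prod_univ_succAbove _ k, Fin.removeNth_apply, ← mul_assoc]
        gcongr
        exact hmerge _
    _ ≤ ENNReal.ofReal (4 / (1 - (b - c)) * S k k ^ (-((1 - (b - c)) / 2))) *
          ∫⁻ y in ellipsoid (schurCompl S k), ∏ i, ENNReal.ofReal (|y i| ^ (-b)) :=
        lintegral_ellipsoid_mul_removeNth_le hS k (by fun_prop) (by fun_prop)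
          (lintegral_closedBall_diag_abs_rpow_neg_le hS k (by linarith) (by linarith))
    _ ≤ ENNReal.ofReal (4 / (1 - b) * (S k k ^ (-((1 - b) / 2)) * S k k ^ (-(c / 2)))) *
          ENNReal.ofReal ((4 / (1 - b)) ^ n * (schurCompl S k).det ^ (-((1 - b) / 2))) := by
        rw [← Real.rpow_add hd, show -((1 - b) / 2) + -(c / 2) = -((1 - (b - c)) / 2) by ring]
        gcongr
        · linarith
        · exact lintegral_ellipsoid_prod_abs_rpow_neg_le (hc.trans hcb) hb₁ hS'
    _ = ENNReal.ofReal ((4 / (1 - b)) ^ (n + 1) * S.det ^ (-((1 - b) / 2)) *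
          S k k ^ (-(c / 2))) := by
        rw [← ENNReal.ofReal_mul (by positivity), det_eq_mul_det_schurCompl S hd.ne',
          Real.mul_rpow hd.le hS'.det_pos.le]
        ring_nf

section HadamardRatio

variable {ι : Type*} [Fintype ι]

/-- The determinant of `S` divided by the product of its diagonal entries. For positive definite `S`
it lies in `(0, 1]` by Hadamard's inequality, and it is invariant under `S ↦ D * S * D` with `D`
diagonal and invertible. -/
noncomputable def hadamardRatio [DecidableEq ι] (S : Matrix ι ι ℝ) : ℝ :=
  S.det / ∏ i, S i i

lemma hadamardRatio_pos [DecidableEq ι] {S : Matrix ι ι ℝ} (hS : S.PosDef) : 0 < hadamardRatio S :=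
  div_pos hS.det_pos (Finset.prod_pos fun _ _ ↦ hS.diag_pos)

lemma prod_rpow_le_inv_card_mul_sum_rpow [Nonempty ι] {u : ι → ℝ} (hu : ∀ i, 0 ≤ u i) (ε : ℝ) :
    ∏ i, u i ^ ε ≤ ∑ k, (Fintype.card ι : ℝ)⁻¹ * u k ^ (Fintype.card ι * ε) := by
  have hcard : (Fintype.card ι : ℝ) ≠ 0 := by exact_mod_cast Fintype.card_ne_zero
  have hroot : ∀ i, (u i ^ (Fintype.card ι * ε)) ^ (Fintype.card ι : ℝ)⁻¹ = u i ^ ε := fun i ↦ by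
    rw [← Real.rpow_mul (hu i), mul_comm, inv_mul_cancel_left₀ hcard]
  simpa only [hroot] using Real.geom_mean_le_arith_mean_weighted Finset.univ
    (fun _ ↦ (Fintype.card ι : ℝ)⁻¹) (fun i ↦ u i ^ (Fintype.card ι * ε))
    (fun _ _ ↦ by positivity) (by simp [hcard]) fun i _ ↦ Real.rpow_nonneg (hu i) _

lemma prod_abs_rpow_neg_le_sum [Nonempty ι] {s ε : ℝ} (hs : s ≠ 0) {w : ι → ℝ} (hw : ∀ i, 0 < w i)
    (x : ι → ℝ) :
    ∏ i, |x i| ^ (-s) ≤ ∑ k, (∏ i, w i) ^ (-ε) * (Fintype.card ι : ℝ)⁻¹ *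
      w k ^ (Fintype.card ι * ε) * (|x k| ^ (Fintype.card ι * ε) * ∏ i, |x i| ^ (-(s + ε))) := by
  by_cases hx : ∃ i, x i = 0
  · obtain ⟨i, hi⟩ := hx
    rw [Finset.prod_eq_zero (Finset.mem_univ i) (by simp [hi, Real.zero_rpow (neg_ne_zero.2 hs)])]
    have hprod : 0 ≤ ∏ i, w i := Finset.prod_nonneg fun i _ ↦ (hw i).le
    exact Finset.sum_nonneg fun k _ ↦ by have := hw k; positivity
  push Not at hx
  have hfactor : ∀ i, |x i| ^ (-s) = w i ^ (-ε) * ((w i * |x i|) ^ ε * |x i| ^ (-(s + ε))) :=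
    fun i ↦ by
      rw [Real.mul_rpow (hw i).le (abs_nonneg _), mul_assoc, ← mul_assoc (w i ^ (-ε)),
        ← Real.rpow_add (hw i), ← Real.rpow_add (abs_pos.2 (hx i))]
      simp
  have hamgm := prod_rpow_le_inv_card_mul_sum_rpow
    (fun i ↦ mul_nonneg (hw i).le (abs_nonneg (x i))) ε
  calc ∏ i, |x i| ^ (-s)
      = (∏ i, w i) ^ (-ε) * ((∏ i, (w i * |x i|) ^ ε) * ∏ i, |x i| ^ (-(s + ε))) := by
        simp only [hfactor, Finset.prod_mul_distrib]
        rw [Real.finsetProd_rpow _ _ fun i _ ↦ (hw i).le]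
    _ ≤ (∏ i, w i) ^ (-ε) * ((∑ k, (Fintype.card ι : ℝ)⁻¹ *
          (w k * |x k|) ^ (Fintype.card ι * ε)) * ∏ i, |x i| ^ (-(s + ε))) := by
        have hprod : 0 ≤ ∏ i, w i := Finset.prod_nonneg fun i _ ↦ (hw i).le
        gcongr
    _ = _ := by
        rw [Finset.sum_mul, Finset.mul_sum]
        refine Finset.sum_congr rfl fun k _ ↦ ?_
        rw [Real.mul_rpow (hw k).le (abs_nonneg _)]
        ring

end HadamardRatio

lemma lintegral_ellipsoid_prod_abs_rpow_neg_le_sum {n : ℕ} [NeZero n] {s ε : ℝ} (hs : s ≠ 0)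
    (hε : 0 ≤ ε) (hεs : n * ε ≤ s + ε) (hsε : s + ε < 1) {S : Matrix (Fin n) (Fin n) ℝ}
    (hS : S.PosDef) {w : Fin n → ℝ} (hw : ∀ i, 0 < w i) :
    ∫⁻ x in ellipsoid S, ENNReal.ofReal (∏ i, |x i| ^ (-s)) ≤
      ∑ k, ENNReal.ofReal ((∏ i, w i) ^ (-ε) * (n : ℝ)⁻¹ * w k ^ (n * ε)) *
        ENNReal.ofReal ((4 / (1 - (s + ε))) ^ n * S.det ^ (-((1 - (s + ε)) / 2)) *
          S k k ^ (-(n * ε / 2))) := by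
  set c : Fin n → ℝ := fun k ↦ (∏ i, w i) ^ (-ε) * (n : ℝ)⁻¹ * w k ^ (n * ε)
  have hprod : 0 < ∏ i, w i := Finset.prod_pos fun i _ ↦ hw i
  have hc : ∀ k, 0 ≤ c k := fun k ↦ by have := hw k; positivity
  have hpointwise : ∀ x : Fin n → ℝ, ENNReal.ofReal (∏ i, |x i| ^ (-s)) ≤
      ∑ k, ENNReal.ofReal (c k) *
        (ENNReal.ofReal (|x k| ^ (n * ε)) * ∏ i, ENNReal.ofReal (|x i| ^ (-(s + ε)))) := fun x ↦ by
    have hterm : ∀ k, ENNReal.ofReal (c k) * (ENNReal.ofReal (|x k| ^ (n * ε)) *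
        ∏ i, ENNReal.ofReal (|x i| ^ (-(s + ε)))) =
        ENNReal.ofReal (c k * (|x k| ^ (n * ε) * ∏ i, |x i| ^ (-(s + ε)))) := fun k ↦ by
      rw [← ENNReal.ofReal_prod_of_nonneg fun i _ ↦ by positivity,
        ← ENNReal.ofReal_mul (by positivity), ← ENNReal.ofReal_mul (hc k)]
    simp only [hterm]
    rw [← ENNReal.ofReal_sum_of_nonneg fun k _ ↦ mul_nonneg (hc k) (by positivity)]
    exact ENNReal.ofReal_le_ofReal (by simpa using prod_abs_rpow_neg_le_sum hs hw x)
  calc ∫⁻ x in ellipsoid S, ENNReal.ofReal (∏ i, |x i| ^ (-s))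
      ≤ ∫⁻ x in ellipsoid S, ∑ k, ENNReal.ofReal (c k) *
          (ENNReal.ofReal (|x k| ^ (n * ε)) * ∏ i, ENNReal.ofReal (|x i| ^ (-(s + ε)))) :=
        lintegral_mono hpointwise
    _ = ∑ k, ENNReal.ofReal (c k) * ∫⁻ x in ellipsoid S,
          ENNReal.ofReal (|x k| ^ (n * ε)) * ∏ i, ENNReal.ofReal (|x i| ^ (-(s + ε))) := by
        rw [lintegral_finsetSum _ fun k _ ↦ by fun_prop]
        exact Finset.sum_congr rfl fun k _ ↦ lintegral_const_mul _ (by fun_prop)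
    _ ≤ _ := by
        gcongr with k
        exact lintegral_ellipsoid_mul_prod_abs_rpow_neg_le (by positivity) hεs hsε hS k

lemma lintegral_ellipsoid_prod_abs_rpow_neg_le_hadamardRatio {n : ℕ} [NeZero n] {s ε : ℝ}
    (hs : s ≠ 0) (hε : 0 ≤ ε) (hεs : n * ε ≤ s + ε) (hsε : s + ε < 1)
    {S : Matrix (Fin n) (Fin n) ℝ} (hS : S.PosDef) :
    ∫⁻ x in ellipsoid S, ENNReal.ofReal (∏ i, |x i| ^ (-s)) ≤
      ENNReal.ofReal ((4 / (1 - (s + ε))) ^ n * S.det ^ (-((1 - s) / 2)) *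
        hadamardRatio S ^ (ε / 2)) := by
  have hn : (n : ℝ) ≠ 0 := by exact_mod_cast NeZero.ne n
  have hdiag : ∀ k, 0 < S k k := fun k ↦ hS.diag_pos
  have hprod : 0 < ∏ i, S i i := Finset.prod_pos fun i _ ↦ hdiag i
  have hdet : 0 < S.det := hS.det_pos
  set w : Fin n → ℝ := fun k ↦ S k k ^ (1 / 2 : ℝ)
  have hw : ∀ k, 0 < w k := fun k ↦ Real.rpow_pos_of_pos (hdiag k) _
  have hwprod : (∏ i, w i) ^ (-ε) = (∏ i, S i i) ^ (-(ε / 2)) := by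
    rw [Real.finsetProd_rpow _ _ fun i _ ↦ (hdiag i).le, ← Real.rpow_mul hprod.le]
    ring_nf
  have hwcancel : ∀ k, w k ^ (n * ε) * S k k ^ (-(n * ε / 2)) = 1 := fun k ↦ by
    rw [← Real.rpow_mul (hdiag k).le, ← Real.rpow_add (hdiag k),
      show 1 / 2 * (n * ε) + -(n * ε / 2) = 0 by ring, Real.rpow_zero]
  have hdetsplit : S.det ^ (-((1 - (s + ε)) / 2)) = S.det ^ (-((1 - s) / 2)) * S.det ^ (ε / 2) := by
    rw [← Real.rpow_add hdet]
    ring_nf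
  have hratio : hadamardRatio S ^ (ε / 2) = S.det ^ (ε / 2) * (∏ i, S i i) ^ (-(ε / 2)) := by
    rw [hadamardRatio, Real.div_rpow hdet.le hprod.le, Real.rpow_neg hprod.le, div_eq_mul_inv]
  set M := (4 / (1 - (s + ε))) ^ n * S.det ^ (-((1 - s) / 2)) * hadamardRatio S ^ (ε / 2) with hM
  have hterm : ∀ k, (∏ i, w i) ^ (-ε) * (n : ℝ)⁻¹ * w k ^ (n * ε) * ((4 / (1 - (s + ε))) ^ n *
      S.det ^ (-((1 - (s + ε)) / 2)) * S k k ^ (-(n * ε / 2))) = (n : ℝ)⁻¹ * M := fun k ↦ by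
    rw [hM, hwprod, hdetsplit, hratio]
    linear_combination (n : ℝ)⁻¹ * (4 / (1 - (s + ε))) ^ n * S.det ^ (-((1 - s) / 2)) *
      (S.det ^ (ε / 2) * (∏ i, S i i) ^ (-(ε / 2))) * hwcancel k
  have hc : ∀ k, 0 ≤ (∏ i, w i) ^ (-ε) * (n : ℝ)⁻¹ * w k ^ (n * ε) := fun k ↦ by
    have := hw k
    rw [hwprod]
    positivity
  refine (lintegral_ellipsoid_prod_abs_rpow_neg_le_sum hs hε hεs hsε hS hw).trans_eq ?_
  simp only [← ENNReal.ofReal_mul (hc _), hterm, Finset.sum_const, Finset.card_univ,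
    Fintype.card_fin, nsmul_eq_mul]
  rw [← ENNReal.ofReal_natCast, ← ENNReal.ofReal_mul (by positivity), mul_inv_cancel_left₀ hn]

section Volume

variable {ι : Type*} [Fintype ι] [DecidableEq ι]

open scoped MatrixOrder in
lemma volume_real_ellipsoid {S : Matrix ι ι ℝ} (hS : S.PosDef) :
    volume.real (ellipsoid S) =
      S.det ^ (-(1 / 2) : ℝ) * volume.real (ellipsoid (1 : Matrix ι ι ℝ)) := by
  obtain ⟨B, rfl⟩ : ∃ B : Matrix ι ι ℝ, S = Bᵀ * B :=
    CStarAlgebra.nonneg_iff_eq_star_mul_self.1 hS.posSemidef.nonneg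
  have hdet : 0 < (Bᵀ * B).det := hS.det_pos
  have hB : B.det ≠ 0 := fun h ↦ by simp [h] at hdet
  have hpre : ellipsoid (Bᵀ * B) = toLin' B ⁻¹' ellipsoid 1 := by
    ext x
    simp [ellipsoid, ← mulVec_mulVec, dotProduct_mulVec, vecMul_transpose]
  rw [hpre, measureReal_def, Measure.addHaar_preimage_linearMap _ (by simpa using hB),
    ENNReal.toReal_mul, ENNReal.toReal_ofReal (abs_nonneg _), LinearMap.det_toLin', abs_inv,
    Real.rpow_neg hdet.le, ← Real.sqrt_eq_rpow, det_mul, det_transpose, Real.sqrt_mul_self_eq_abs,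
    measureReal_def]

lemma volume_real_ellipsoid_one_pos : 0 < volume.real (ellipsoid (1 : Matrix ι ι ℝ)) := by
  have hball : ellipsoid (1 : Matrix ι ι ℝ) =
      (WithLp.toLp 2 : (ι → ℝ) → EuclideanSpace ℝ ι) ⁻¹' Metric.closedBall 0 1 := by
    ext x
    simp [ellipsoid, EuclideanSpace.norm_eq, dotProduct, sq]
  rw [hball, (PiLp.volume_preserving_toLp ι).measureReal_preimage
    measurableSet_closedBall.nullMeasurableSet]
  exact ENNReal.toReal_pos (Metric.measure_closedBall_pos volume 0 one_pos).ne'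
    measure_closedBall_lt_top.ne

lemma det_rpow_eq_volume_real_ellipsoid_div_rpow {S : Matrix ι ι ℝ} (hS : S.PosDef) (p : ℝ) :
    S.det ^ (-(p / 2)) =
      (volume.real (ellipsoid S) / volume.real (ellipsoid (1 : Matrix ι ι ℝ))) ^ p := by
  rw [volume_real_ellipsoid hS, mul_div_cancel_right₀ _ volume_real_ellipsoid_one_pos.ne',
    ← Real.rpow_mul hS.det_pos.le]
  ring_nf

end Volume

section Spectrum

variable {ι : Type*} [Fintype ι] [DecidableEq ι]

open scoped MatrixOrder in
lemma mul_le_dotProduct_mulVec_of_le_eigenvalues {T : Matrix ι ι ℝ} (hT : T.IsHermitian) {c : ℝ}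
    (hc : ∀ i, c ≤ hT.eigenvalues i) (x : ι → ℝ) : c * (x ⬝ᵥ x) ≤ x ⬝ᵥ T *ᵥ x := by
  have hle : algebraMap ℝ _ c ≤ T := by
    refine algebraMap_le_of_le_spectrum (ha := hT) ?_
    rw [hT.spectrum_real_eq_range_eigenvalues]
    exact Set.forall_mem_range.2 hc
  simpa [sub_mulVec, Algebra.algebraMap_eq_smul_one, smul_mulVec, dotProduct_sub] using
    (Matrix.le_iff.1 hle).dotProduct_mulVec_nonneg x

open scoped MatrixOrder in
lemma dotProduct_mulVec_le_mul_of_eigenvalues_le {T : Matrix ι ι ℝ} (hT : T.IsHermitian) {c : ℝ}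
    (hc : ∀ i, hT.eigenvalues i ≤ c) (x : ι → ℝ) : x ⬝ᵥ T *ᵥ x ≤ c * (x ⬝ᵥ x) := by
  have hle : T ≤ algebraMap ℝ _ c := by
    refine le_algebraMap_of_spectrum_le (ha := hT) ?_
    rw [hT.spectrum_real_eq_range_eigenvalues]
    exact Set.forall_mem_range.2 hc
  simpa [sub_mulVec, Algebra.algebraMap_eq_smul_one, smul_mulVec, dotProduct_sub] using
    (Matrix.le_iff.1 hle).dotProduct_mulVec_nonneg x

lemma eigenvalues_le_trace {T : Matrix ι ι ℝ} (hT : T.PosSemidef) (i : ι) :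
    hT.isHermitian.eigenvalues i ≤ T.trace := by
  rw [hT.isHermitian.trace_eq_sum_eigenvalues]
  exact Finset.single_le_sum (f := hT.isHermitian.eigenvalues)
    (fun j _ ↦ hT.eigenvalues_nonneg j) (Finset.mem_univ i)

lemma det_div_trace_pow_le_eigenvalues {T : Matrix ι ι ℝ} (hT : T.PosSemidef) (i : ι) :
    T.det / T.trace ^ (Fintype.card ι - 1) ≤ hT.isHermitian.eigenvalues i := by
  refine div_le_of_le_mul₀ (pow_nonneg hT.trace_nonneg _) (hT.eigenvalues_nonneg i) ?_
  calc T.det = hT.isHermitian.eigenvalues i *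
        ∏ j ∈ Finset.univ.erase i, hT.isHermitian.eigenvalues j := by
        rw [hT.isHermitian.det_eq_prod_eigenvalues]
        exact (Finset.mul_prod_erase _ _ (Finset.mem_univ i)).symm
    _ ≤ hT.isHermitian.eigenvalues i * ∏ _j ∈ Finset.univ.erase i, T.trace := by
        refine mul_le_mul_of_nonneg_left ?_ (hT.eigenvalues_nonneg i)
        exact Finset.prod_le_prod (fun j _ ↦ hT.eigenvalues_nonneg j)
          fun j _ ↦ eigenvalues_le_trace hT j
    _ = hT.isHermitian.eigenvalues i * T.trace ^ (Fintype.card ι - 1) := by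
        rw [Finset.prod_const, Finset.card_erase_of_mem (Finset.mem_univ i), Finset.card_univ]

end Spectrum

section Distortion

variable {ι : Type*} [Fintype ι]

/-- The values of `x ↦ Q (D x)` on the Euclidean unit sphere, where `Q` is the quadratic form of `S`
and `D` the diagonal matrix with entries `d`. -/
def dilatedValues (S : Matrix ι ι ℝ) (d : ι → ℝ) : Set ℝ :=
  {q | ∃ x : ι → ℝ, (∑ i, (x i) ^ 2) = 1 ∧
    q = (fun i => d i * x i) ⬝ᵥ S.mulVec (fun i => d i * x i)}

/-- The quantity `Δ(Q)` for the quadratic form `Q` of `S`: the logarithm of the smallest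
ratio between the extreme values of `Q` on the unit sphere after an invertible diagonal change of
variables. -/
noncomputable def diagDistortion (S : Matrix ι ι ℝ) : ℝ :=
  sInf {t | ∃ d : ι → ℝ, (∀ i, d i ≠ 0) ∧
    t = Real.log (sSup (dilatedValues S d) / sInf (dilatedValues S d))}

lemma dilatedValues_nonempty [Nonempty ι] (S : Matrix ι ι ℝ) (d : ι → ℝ) :
    (dilatedValues S d).Nonempty := by
  classical
  exact ⟨_, Pi.single (Classical.arbitrary ι) 1, by simp [Pi.single_apply, ite_pow], rfl⟩

lemma dilatedValues_subset_Icc [DecidableEq ι] {S : Matrix ι ι ℝ} (hS : S.PosSemidef) {d : ι → ℝ}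
    {T : Matrix ι ι ℝ} (hT : T = diagonal d * S * diagonal d) :
    dilatedValues S d ⊆ Set.Icc (T.det / T.trace ^ (Fintype.card ι - 1)) T.trace := by
  have hTpos : T.PosSemidef := by
    simpa [hT] using hS.conjTranspose_mul_mul_same (diagonal d)
  rintro _ ⟨x, hx, rfl⟩
  have hform : (fun i ↦ d i * x i) ⬝ᵥ S *ᵥ (fun i ↦ d i * x i) = x ⬝ᵥ T *ᵥ x := by
    have hDx : (fun i ↦ d i * x i) = diagonal d *ᵥ x := by
      ext i
      simp [mulVec_diagonal]
    rw [hT, hDx, ← mulVec_mulVec, ← mulVec_mulVec, dotProduct_mulVec x, ← mulVec_transpose,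
      diagonal_transpose]
  have hxx : x ⬝ᵥ x = 1 := by simpa [dotProduct, sq] using hx
  rw [hform]
  constructor
  · simpa [hxx] using mul_le_dotProduct_mulVec_of_le_eigenvalues hTpos.isHermitian
      (det_div_trace_pow_le_eigenvalues hTpos) x
  · simpa [hxx] using dotProduct_mulVec_le_mul_of_eigenvalues_le hTpos.isHermitian
      (eigenvalues_le_trace hTpos) x

lemma log_dilatedValues_nonneg {S : Matrix ι ι ℝ} (hS : S.PosSemidef) (d : ι → ℝ) :
    0 ≤ Real.log (sSup (dilatedValues S d) / sInf (dilatedValues S d)) := by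
  classical
  have hbdd := dilatedValues_subset_Icc hS (d := d) rfl
  have hnonneg : 0 ≤ sInf (dilatedValues S d) := by
    refine Real.sInf_nonneg ?_
    rintro _ ⟨x, -, rfl⟩
    simpa using hS.dotProduct_mulVec_nonneg fun i ↦ d i * x i
  have hle : sInf (dilatedValues S d) ≤ sSup (dilatedValues S d) :=
    Real.sInf_le_sSup _ (bddBelow_Icc.mono hbdd) (bddAbove_Icc.mono hbdd)
  obtain h0 | hpos := hnonneg.eq_or_lt
  · simp [← h0]
  · exact Real.log_nonneg ((one_le_div hpos).2 hle)

lemma diagDistortion_le {S : Matrix ι ι ℝ} (hS : S.PosSemidef) {d : ι → ℝ} (hd : ∀ i, d i ≠ 0) :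
    diagDistortion S ≤ Real.log (sSup (dilatedValues S d) / sInf (dilatedValues S d)) := by
  refine csInf_le ⟨0, ?_⟩ ⟨d, hd, rfl⟩
  rintro _ ⟨e, -, rfl⟩
  exact log_dilatedValues_nonneg hS e

lemma exists_dilatedValues_subset_Icc [DecidableEq ι] {S : Matrix ι ι ℝ} (hS : S.PosDef) :
    ∃ d : ι → ℝ, (∀ i, d i ≠ 0) ∧ dilatedValues S d ⊆
      Set.Icc (hadamardRatio S / (Fintype.card ι : ℝ) ^ (Fintype.card ι - 1)) (Fintype.card ι) := by
  set d : ι → ℝ := fun i ↦ (√(S i i))⁻¹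
  set T := diagonal d * S * diagonal d with hT
  have hdiag : ∀ i, 0 < S i i := fun i ↦ hS.diag_pos
  have hsq : ∀ i, d i * d i = (S i i)⁻¹ := fun i ↦ by
    rw [← mul_inv, Real.mul_self_sqrt (hdiag i).le]
  have htrace : T.trace = Fintype.card ι := by
    have hone : ∀ i, T i i = 1 := fun i ↦ by
      rw [hT, mul_diagonal, diagonal_mul, mul_right_comm, hsq, inv_mul_cancel₀ (hdiag i).ne']
    simp [trace, hone]
  have hdet : T.det = hadamardRatio S := by
    rw [hT, det_mul, det_mul, det_diagonal, mul_right_comm, ← Finset.prod_mul_distrib,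
      Finset.prod_congr rfl fun i _ ↦ hsq i, Finset.prod_inv_distrib, hadamardRatio, div_eq_inv_mul]
  refine ⟨d, fun i ↦ inv_ne_zero (Real.sqrt_pos.2 (hdiag i)).ne', ?_⟩
  rw [← htrace, ← hdet]
  exact dilatedValues_subset_Icc hS.posSemidef hT

lemma hadamardRatio_le_exp_neg_diagDistortion [DecidableEq ι] [Nonempty ι] {S : Matrix ι ι ℝ}
    (hS : S.PosDef) :
    hadamardRatio S ≤ (Fintype.card ι : ℝ) ^ Fintype.card ι * Real.exp (-diagDistortion S) := by
  obtain ⟨d, hd, hsub⟩ := exists_dilatedValues_subset_Icc hS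
  set N := (Fintype.card ι : ℝ)
  have : 0 < N := Nat.cast_pos.2 Fintype.card_pos
  have hh := hadamardRatio_pos hS
  set c := hadamardRatio S / N ^ (Fintype.card ι - 1) with hc
  have hc₀ : 0 < c := by positivity
  have hne := dilatedValues_nonempty S d
  have hinf : c ≤ sInf (dilatedValues S d) := le_csInf hne fun q hq ↦ (hsub hq).1
  have hsup : sSup (dilatedValues S d) ≤ N := csSup_le hne fun q hq ↦ (hsub hq).2
  have hle : sInf (dilatedValues S d) ≤ sSup (dilatedValues S d) :=
    Real.sInf_le_sSup _ (bddBelow_Icc.mono hsub) (bddAbove_Icc.mono hsub)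
  have hNc : N / c = N ^ Fintype.card ι / hadamardRatio S := by
    rw [hc, div_div_eq_mul_div, ← pow_succ', Nat.sub_add_cancel Fintype.card_pos]
  have hΔ : diagDistortion S ≤ Real.log (N ^ Fintype.card ι / hadamardRatio S) :=
    calc diagDistortion S
        ≤ Real.log (sSup (dilatedValues S d) / sInf (dilatedValues S d)) :=
          diagDistortion_le hS.posSemidef hd
      _ ≤ Real.log (N / c) := by
          have hinf₀ := hc₀.trans_le hinf
          exact Real.log_le_log (div_pos (hinf₀.trans_le hle) hinf₀) (by gcongr)
      _ = Real.log (N ^ Fintype.card ι / hadamardRatio S) := by rw [hNc]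
  rw [Real.le_log_iff_exp_le (by positivity), le_div_iff₀ hh] at hΔ
  rwa [Real.exp_neg, ← div_eq_mul_inv, le_div_iff₀ (Real.exp_pos _), mul_comm]

end Distortion

lemma exists_pos_mul_le_add_lt_one {n s : ℝ} (hn : 1 ≤ n) (hs₀ : 0 < s) (hs₁ : s < 1) :
    ∃ ε : ℝ, 0 < ε ∧ n * ε ≤ s + ε ∧ s + ε < 1 := by
  have hs : 0 < s * (1 - s) := mul_pos hs₀ (by linarith)
  have hpos : 0 < s * (1 - s) / n := by positivity
  have hle : s * (1 - s) / n ≤ s * (1 - s) := div_le_self hs.le hn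
  refine ⟨s * (1 - s) / n, hpos, ?_, by nlinarith⟩
  rw [mul_div_cancel₀ _ (by positivity)]
  nlinarith

lemma integral_ellipsoid_prod_abs_rpow_neg_le {n : ℕ} [NeZero n] {s ε : ℝ} (hs : s ≠ 0)
    (hε : 0 ≤ ε) (hεs : n * ε ≤ s + ε) (hsε : s + ε < 1) {S : Matrix (Fin n) (Fin n) ℝ}
    (hS : S.PosDef) :
    ∫ x in ellipsoid S, ∏ i, |x i| ^ (-s) ≤
      (4 / (1 - (s + ε))) ^ n * S.det ^ (-((1 - s) / 2)) * hadamardRatio S ^ (ε / 2) := by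
  have hmeas : Measurable fun x : Fin n → ℝ ↦ ∏ i, |x i| ^ (-s) := by fun_prop
  have hdet := hS.det_pos
  have hratio := hadamardRatio_pos hS
  have : 0 < 1 - (s + ε) := by linarith
  rw [integral_eq_lintegral_of_nonneg_ae (.of_forall fun x ↦ by positivity)
    hmeas.aestronglyMeasurable]
  exact ENNReal.toReal_le_of_le_ofReal (by positivity)
    (lintegral_ellipsoid_prod_abs_rpow_neg_le_hadamardRatio hs hε hεs hsε hS)

theorem integral_bound_posdef_quadratic_form_general (n : ℕ) [NeZero n] {s : ℝ} (hs₀ : 0 < s)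
    (hs₁ : s < 1) :
    ∃ C : ℝ, 0 < C ∧ ∃ δ : ℝ, 0 < δ ∧ ∀ S : Matrix (Fin n) (Fin n) ℝ, S.PosDef →
      ∫ x in ellipsoid S, ∏ i, |x i| ^ (-s) ≤
        C * Real.exp (-δ * diagDistortion S) * volume.real (ellipsoid S) ^ (1 - s) := by
  have hn : (1 : ℝ) ≤ n := Nat.one_le_cast.2 NeZero.one_le
  obtain ⟨ε, hε, hεs, hsε⟩ := exists_pos_mul_le_add_lt_one hn hs₀ hs₁
  set ω := volume.real (ellipsoid (1 : Matrix (Fin n) (Fin n) ℝ))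
  have hω : 0 < ω := volume_real_ellipsoid_one_pos
  set A := (4 / (1 - (s + ε))) ^ n
  have : 0 < A := pow_pos (div_pos four_pos (by linarith)) n
  refine ⟨A * ((n : ℝ) ^ n) ^ (ε / 2) / ω ^ (1 - s), by positivity, ε / 2, by positivity,
    fun S hS ↦ ?_⟩
  have hdet := hS.det_pos
  have hratio := hadamardRatio_pos hS
  calc ∫ x in ellipsoid S, ∏ i, |x i| ^ (-s)
      ≤ A * S.det ^ (-((1 - s) / 2)) * hadamardRatio S ^ (ε / 2) :=
        integral_ellipsoid_prod_abs_rpow_neg_le hs₀.ne' hε.le hεs hsε hS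
    _ ≤ A * S.det ^ (-((1 - s) / 2)) *
          ((n : ℝ) ^ n * Real.exp (-diagDistortion S)) ^ (ε / 2) := by
        gcongr
        simpa using hadamardRatio_le_exp_neg_diagDistortion hS
    _ = A * ((n : ℝ) ^ n) ^ (ε / 2) / ω ^ (1 - s) * Real.exp (-(ε / 2) * diagDistortion S) *
          volume.real (ellipsoid S) ^ (1 - s) := by
        rw [det_rpow_eq_volume_real_ellipsoid_div_rpow hS, Real.div_rpow measureReal_nonneg hω.le,
          Real.mul_rpow (by positivity) (Real.exp_pos _).le, ← Real.exp_mul, neg_mul_comm,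
          mul_comm (diagDistortion S)]
        ring

/-- For each `n ≥ 1` there are `C > 0` and `δ > 0` such that for every positive
definite quadratic form `Q(x) = xᵀ S x` on `ℝⁿ`,
`∫_{Q ≤ 1} ∏ |x_i|^{-1/2} dx ≤ C · exp(−δ·Δ(Q)) · vol{Q ≤ 1}^{1/2}`,
where `Δ(Q)` is the infimum over invertible diagonal matrices `D` of
`log (sup_{‖x‖=1} Q(Dx) / inf_{‖x‖=1} Q(Dx))`. -/
theorem integral_bound_posdef_quadratic_form (n : ℕ) (hn : 1 ≤ n) :
    ∃ C : ℝ, 0 < C ∧ ∃ δ : ℝ, 0 < δ ∧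
      ∀ S : Matrix (Fin n) (Fin n) ℝ, S.IsSymm → S.PosDef →
        (∫ x in {x : Fin n → ℝ | x ⬝ᵥ S.mulVec x ≤ 1}, ∏ i, |x i| ^ (-(1/2) : ℝ)) ≤
          C *
          Real.exp (-δ *
            sInf {t : ℝ | ∃ d : Fin n → ℝ, (∀ i, d i ≠ 0) ∧
              t = Real.log (
                sSup {q : ℝ | ∃ x : Fin n → ℝ, (∑ i, (x i) ^ 2) = 1 ∧
                  q = (fun i => d i * x i) ⬝ᵥ S.mulVec (fun i => d i * x i)} /
                sInf {q : ℝ | ∃ x : Fin n → ℝ, (∑ i, (x i) ^ 2) = 1 ∧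
                  q = (fun i => d i * x i) ⬝ᵥ S.mulVec (fun i => d i * x i)})}) *
          Real.sqrt (volume {x : Fin n → ℝ | x ⬝ᵥ S.mulVec x ≤ 1}).toReal := by
  have : NeZero n := ⟨by lia⟩
  obtain ⟨C, hC, δ, hδ, hbound⟩ :=
    integral_bound_posdef_quadratic_form_general n (s := 1 / 2) (by norm_num) (by norm_num)
  simp only [sub_half, ← Real.sqrt_eq_rpow] at hbound
  exact ⟨C, hC, δ, hδ, fun S _ hS ↦ hbound S hS⟩
end

section
/- Let F be an algebraically closed field of characteristic 0, and let sl₃(F) denote the Lie algebra of traceless 3×3 matrices over F with bracket [X,Y] = XY − YX. Let 𝔧 be a Lie subalgebra of sl₃(F) (an F-linear subspace closed under the bracket) that contains the elementary matrix E₁₃ (the matrix with entry 1 in position (1,3) and 0 elsewhere), and suppose 𝔧 ≠ sl₃(F). Then there exists an F-linear subspace W of F³ with W ≠ 0 and W ≠ F³ such that X·w ∈ W for every X ∈ 𝔧 and every w ∈ W (matrix acting on column vectors). -/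
/-!
Suppose the subalgebra acts irreducibly on `V = F³`, and let `e = v ⊗ φ` be its rank-one nilpotent.
If `φ (x v) = 0` for all `x`, then pairing `(ad z)⁴ e` with `v` and `φ` gives `φ (z z v) = 0`, hence
`φ (x y v) = 0` for all `x, y`, so `ker φ` is spanned by `v` and some `y v` and is invariant,
a contradiction. Otherwise some `y` has `φ (y v) = 1`; then `h = [e, y]` is `diag(1, 0, -1)`
in a suitable basis with `e = E₁₃`, and a polynomial in `ad h` extracts from `y` its components of
weight `±2`, namely `E₃₁` and a multiple of `e`. Irreducibility further gives an element
`a E₁₂ + c E₂₃` with `a c ≠ 0`, which together with `E₁₃` and `E₃₁` generates `sl₃`.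
-/

open LieModule Matrix Module

attribute [local instance] LieRing.ofAssociativeRing

section MatrixLieSubalgebra

/-- The matrix `a E₁₂ + c E₂₃`. These matrices form the eigenvalue-one space of
`ad (diag(1, 0, -1))` on `3 × 3` matrices; a Lie subalgebra containing `E₁₃` and `E₃₁` contains
`sl₃` as soon as it contains them. -/
def raisingMatrix {R : Type*} [AddZeroClass R] (a c : R) : Matrix (Fin 3) (Fin 3) R :=
  single 0 1 a + single 1 2 c

section CommRing

variable {R : Type*} [CommRing R] {M : LieSubalgebra R (Matrix (Fin 3) (Fin 3) R)}
  {X : Matrix (Fin 3) (Fin 3) R}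

theorem raisingMatrix_lower_entries_mem (hE : single 0 2 1 ∈ M) (hF : single 2 0 1 ∈ M)
    (hX : X ∈ M) : raisingMatrix (X 2 1) (-X 1 0) ∈ M := by
  have h_eq : raisingMatrix (X 2 1) (-X 1 0) = ⁅single (0 : Fin 3) (2 : Fin 3) (1 : R), X⁆
      - X 2 0 • ⁅single (0 : Fin 3) (2 : Fin 3) (1 : R), single (2 : Fin 3) (0 : Fin 3) (1 : R)⁆
      - (X 2 2 - X 0 0) • single 0 2 1 := by
    ext i j
    fin_cases i <;> fin_cases j <;>
      simp [raisingMatrix, Ring.lie_def, mul_apply, single_apply]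
  rw [h_eq]
  exact M.sub_mem (M.sub_mem (M.lie_mem hE hX) (M.smul_mem _ (M.lie_mem hE hF)))
    (M.smul_mem _ hE)

theorem raisingMatrix_upper_entries_mem (hE : single 0 2 1 ∈ M) (hF : single 2 0 1 ∈ M)
    (hX : X ∈ M) : raisingMatrix (X 0 1) (X 1 2) ∈ M := by
  have h := raisingMatrix_lower_entries_mem hE hF (M.lie_mem hF hX)
  simpa [Ring.lie_def, mul_apply, Fin.sum_univ_three, single_apply] using h

theorem mem_of_trace_eq_zero_of_raisingMatrix_mem (hE : single 0 2 1 ∈ M)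
    (hF : single 2 0 1 ∈ M) (hraise : ∀ a c : R, raisingMatrix a c ∈ M) (hX : trace X = 0) :
    X ∈ M := by
  have h_diag : X 0 0 = -X 1 1 - X 2 2 := by
    rw [trace_fin_three] at hX
    linear_combination hX
  have h_eq : X = raisingMatrix (X 0 1) (X 1 2)
      + ⁅single (2 : Fin 3) (0 : Fin 3) (1 : R), raisingMatrix (X 2 1) (-X 1 0)⁆
      + X 0 2 • single 0 2 1 + X 2 0 • single 2 0 1
      + X 1 1 • ⁅raisingMatrix (1 : R) 0,
        ⁅single (2 : Fin 3) (0 : Fin 3) (1 : R), raisingMatrix (0 : R) 1⁆⁆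
      - X 2 2 • ⁅single (0 : Fin 3) (2 : Fin 3) (1 : R),
        single (2 : Fin 3) (0 : Fin 3) (1 : R)⁆ := by
    ext i j
    fin_cases i <;> fin_cases j <;>
      simp [raisingMatrix, Ring.lie_def, mul_apply, single_apply, h_diag]
  rw [h_eq]
  exact M.sub_mem (M.add_mem (M.add_mem (M.add_mem (M.add_mem (hraise _ _)
    (M.lie_mem hF (hraise _ _))) (M.smul_mem _ hE)) (M.smul_mem _ hF))
    (M.smul_mem _ (M.lie_mem (hraise _ _) (M.lie_mem hF (hraise _ _)))))
    (M.smul_mem _ (M.lie_mem hE hF))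

theorem lie_lie_raisingMatrix (a c : R) :
    ⁅⁅raisingMatrix a c, ⁅single (2 : Fin 3) (0 : Fin 3) (1 : R), raisingMatrix a c⁆⁆,
        raisingMatrix a c⁆
      = (3 * (a * c)) • raisingMatrix (-a) c := by
  have h_diag : ⁅raisingMatrix a c, ⁅single (2 : Fin 3) (0 : Fin 3) (1 : R), raisingMatrix a c⁆⁆
      = (a * c) • diagonal ![-1, 2, -1] := by
    ext i j
    fin_cases i <;> fin_cases j <;>
      simp [raisingMatrix, Ring.lie_def, mul_apply, Fin.sum_univ_three, single_apply]
    ring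
  rw [h_diag]
  ext i j
  fin_cases i <;> fin_cases j <;>
    simp [raisingMatrix, Ring.lie_def] <;> ring

end CommRing

theorem raisingMatrix_mem_of_ne_zero {F : Type*} [Field F] (h2 : (2 : F) ≠ 0) (h3 : (3 : F) ≠ 0)
    {M : LieSubalgebra F (Matrix (Fin 3) (Fin 3) F)} (hF : single 2 0 1 ∈ M) {a c : F}
    (ha : a ≠ 0) (hc : c ≠ 0) (hac : raisingMatrix a c ∈ M) (a' c' : F) :
    raisingMatrix a' c' ∈ M := by
  have h_neg : raisingMatrix (-a) c ∈ M := by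
    have h_lie := M.lie_mem (M.lie_mem hac (M.lie_mem hF hac)) hac
    rw [lie_lie_raisingMatrix] at h_lie
    exact (M.toSubmodule.smul_mem_iff (by simp [h3, ha, hc])).1 h_lie
  have h_eq : raisingMatrix a' c' = (a' / (2 * a)) • (raisingMatrix a c - raisingMatrix (-a) c)
      + (c' / (2 * c)) • (raisingMatrix a c + raisingMatrix (-a) c) := by
    ext i j
    fin_cases i <;> fin_cases j <;> simp [raisingMatrix] <;> field
  rw [h_eq]
  exact M.add_mem (M.smul_mem _ (M.sub_mem hac h_neg)) (M.smul_mem _ (M.add_mem hac h_neg))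

end MatrixLieSubalgebra

section Representation

variable {F L V : Type*} [Field F] [LieRing L] [AddCommGroup V] [Module F V] [LieRingModule L V]

theorem exists_lie_notMem_of_isIrreducible [IsIrreducible F L V] {W : Submodule F V}
    (hbot : W ≠ ⊥) (htop : W ≠ ⊤) : ∃ x : L, ∃ m ∈ W, ⁅x, m⁆ ∉ W := by
  by_contra! h_inv
  let N : LieSubmodule F L V := { W with lie_mem := fun {x m} hm => h_inv x m hm }
  rcases eq_bot_or_eq_top N with hN | hN
  · exact hbot (by simpa [N] using congrArg LieSubmodule.toSubmodule hN)
  · exact htop (by simpa [N] using congrArg LieSubmodule.toSubmodule hN)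

variable [LieAlgebra F L] [LieModule F L V] {e : L} {v : V} {φ : Dual F V}

theorem dual_lie_lie_eq_zero (h2 : (2 : F) ≠ 0) (h3 : (3 : F) ≠ 0)
    (he : ∀ m, ⁅e, m⁆ = φ m • v) (hφv : φ v = 0) (h_lie : ∀ x : L, φ ⁅x, v⁆ = 0) (x y : L) :
    φ ⁅x, ⁅y, v⁆⁆ = 0 := by
  have h_sq (z : L) : φ ⁅z, ⁅z, v⁆⁆ = 0 := by
    have h_ad4 : φ ⁅⁅z, ⁅z, ⁅z, ⁅z, e⁆⁆⁆⁆, v⁆ = 2 * 3 * φ ⁅z, ⁅z, v⁆⁆ ^ 2 := by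
      simp only [lie_lie, he, hφv, h_lie, zero_smul, lie_zero, sub_self, zero_sub, sub_neg_eq_add,
        zero_add, lie_smul, lie_neg, lie_sub, map_sub, map_smul, smul_eq_mul, map_neg, mul_zero,
        sub_zero]
      ring
    simpa [h2, h3] using h_ad4.symm.trans (h_lie _)
  have h_symm : φ ⁅x, ⁅y, v⁆⁆ - φ ⁅y, ⁅x, v⁆⁆ = 0 := by simpa [lie_lie] using h_lie ⁅x, y⁆
  have h_polar : φ ⁅x, ⁅y, v⁆⁆ + φ ⁅y, ⁅x, v⁆⁆ = 0 := by
    simpa [h_sq, add_comm] using h_sq (x + y)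
  exact (mul_eq_zero.1 (by linear_combination h_symm + h_polar :
    2 * φ ⁅x, ⁅y, v⁆⁆ = 0)).resolve_left h2

theorem exists_dual_lie_ne_zero [IsIrreducible F L V] (h2 : (2 : F) ≠ 0) (h3 : (3 : F) ≠ 0)
    (hV : finrank F V = 3) (he : ∀ m, ⁅e, m⁆ = φ m • v) (hv : v ≠ 0) (hφ : φ ≠ 0)
    (hφv : φ v = 0) : ∃ x : L, φ ⁅x, v⁆ ≠ 0 := by
  by_contra! h_lie
  have : FiniteDimensional F V := .of_finrank_eq_succ hV
  have h_span_top : Submodule.span F {v} ≠ ⊤ := by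
    intro h
    have h_finrank := finrank_span_singleton (K := F) hv
    rw [h, finrank_top] at h_finrank
    lia
  obtain ⟨y, hy⟩ : ∃ y : L, ⁅y, v⁆ ∉ Submodule.span F {v} := by
    obtain ⟨y, m, hm, hy⟩ := exists_lie_notMem_of_isIrreducible (L := L) (by simpa) h_span_top
    obtain ⟨c, rfl⟩ := Submodule.mem_span_singleton.1 hm
    exact ⟨y, fun h => hy (by simpa using Submodule.smul_mem _ c h)⟩
  have h_ker : Submodule.span F {v, ⁅y, v⁆} = LinearMap.ker φ := by
    refine Submodule.eq_of_le_of_finrank_eq ?_ ?_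
    · simp [Submodule.span_le, Set.insert_subset_iff, hφv, h_lie]
    · have h_indep : LinearIndependent F ![v, ⁅y, v⁆] :=
        (LinearIndependent.pair_iff' hv).2 fun c hc =>
          hy (hc ▸ Submodule.smul_mem _ c (Submodule.mem_span_singleton_self v))
      have h_finrank := finrank_span_eq_card h_indep
      have h_ker_finrank := Dual.finrank_ker_add_one_of_ne_zero hφ
      rw [range_cons_cons_empty, Fintype.card_fin] at h_finrank
      lia
  obtain ⟨x, m, hm, hx⟩ := exists_lie_notMem_of_isIrreducible (L := L) (W := LinearMap.ker φ)
    (by rw [Submodule.ne_bot_iff]; exact ⟨v, hφv, hv⟩) (by simpa [LinearMap.ker_eq_top])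
  rw [← h_ker, Submodule.mem_span_pair] at hm
  obtain ⟨a, c, rfl⟩ := hm
  exact hx (by simp [h_lie, dual_lie_lie_eq_zero h2 h3 he hφv h_lie])

-- `ad h` has eigenvalues in `{0, ±1, ±2}`, and `t⁴ - t²` vanishes at `0, ±1` and is `12` at `±2`.
theorem ad_pow_four_sub_ad_sq_lie {h : L} {v w : V} {φ ψ : Dual F V}
    (hh : ∀ m, ⁅h, m⁆ = ψ m • v - φ m • w) (hφv : φ v = 0) (hφw : φ w = 1) (hψv : ψ v = 1)
    (hψw : ψ w = 0) (x : L) (m : V) :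
    ⁅⁅h, ⁅h, ⁅h, ⁅h, x⁆⁆⁆⁆ - ⁅h, ⁅h, x⁆⁆, m⁆
      = (12 : F) • ((ψ ⁅x, w⁆ * φ m) • v + (φ ⁅x, v⁆ * ψ m) • w) := by
  simp only [lie_lie, sub_lie, hh, lie_sub, lie_smul, lie_neg, map_sub, map_smul, map_neg, hφv,
    hφw, hψv, hψw, smul_eq_mul, mul_one, mul_zero, sub_zero, zero_sub, one_smul, zero_smul,
    smul_add]
  module

theorem exists_opposite_rankOne (h2 : (2 : F) ≠ 0) (h3 : (3 : F) ≠ 0)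
    (he : ∀ m, ⁅e, m⁆ = φ m • v) (hφv : φ v = 0) {x : L} (hx : φ ⁅x, v⁆ ≠ 0) :
    ∃ (f : L) (w : V) (ψ : Dual F V),
      (∀ m, ⁅f, m⁆ = ψ m • w) ∧ φ w = 1 ∧ ψ v = 1 ∧ ψ w = 0 := by
  obtain ⟨y, hy⟩ : ∃ y : L, φ ⁅y, v⁆ = 1 := ⟨(φ ⁅x, v⁆)⁻¹ • x, by simp [hx]⟩
  -- `⁅e, y⁆ = v ⊗ (φ ∘ y) - (y v) ⊗ φ` is unchanged when the same multiple of `v` and of `φ` is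
  -- subtracted from `y v` and `φ ∘ y`; `c` is the multiple that gives `ψ w = 0`.
  let c := φ ⁅y, ⁅y, v⁆⁆ / 2
  let w := ⁅y, v⁆ - c • v
  let ψ : Dual F V := φ ∘ₗ toEnd F L V y - c • φ
  have hφw : φ w = 1 := by simp [w, hy, hφv]
  have hψv : ψ v = 1 := by simp [ψ, hy, hφv]
  have hψw : ψ w = 0 := by
    simp only [ψ, w, c, LinearMap.sub_apply, LinearMap.comp_apply, LinearMap.smul_apply,
      toEnd_apply_apply, map_sub, map_smul, smul_eq_mul, hy, hφv, mul_one, mul_zero, sub_zero]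
    field
  have hh (m : V) : ⁅⁅e, y⁆, m⁆ = ψ m • v - φ m • w := by
    simp only [lie_lie, he, lie_smul, ψ, w, LinearMap.sub_apply, LinearMap.comp_apply,
      toEnd_apply_apply, LinearMap.smul_apply, smul_eq_mul]
    module
  let g := ⁅⁅e, y⁆, ⁅⁅e, y⁆, ⁅⁅e, y⁆, ⁅⁅e, y⁆, y⁆⁆⁆⁆ - ⁅⁅e, y⁆, ⁅⁅e, y⁆, y⁆⁆
  refine ⟨(12 : F)⁻¹ • g - ψ ⁅y, w⁆ • e, w, ψ, fun m => ?_, hφw, hψv, hψw⟩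
  have h12 : (12 : F) ≠ 0 := by
    convert mul_ne_zero (mul_ne_zero h2 h2) h3 using 1
    norm_num
  rw [sub_lie, smul_lie, smul_lie, ad_pow_four_sub_ad_sq_lie hh hφv hφw hψv hψw,
    inv_smul_smul₀ h12, he, hy]
  module

theorem exists_basis_of_dual_pair (hV : finrank F V = 3) {v w : V} {φ ψ : Dual F V}
    (hφv : φ v = 0) (hφw : φ w = 1) (hψv : ψ v = 1) (hψw : ψ w = 0) :
    ∃ b : Basis (Fin 3) F V, b 0 = v ∧ b 2 = w ∧ b.coord 0 = ψ ∧ b.coord 2 = φ := by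
  have : FiniteDimensional F V := .of_finrank_eq_succ hV
  obtain ⟨u, hu, hu0⟩ := (LinearMap.ker (ψ.prod φ)).ne_bot_iff.1
    (LinearMap.ker_ne_bot_of_finrank_lt (by simp [hV]))
  obtain ⟨hψu, hφu⟩ : ψ u = 0 ∧ φ u = 0 := by simpa using hu
  have h_indep : LinearIndependent F ![v, u, w] := by
    rw [Fintype.linearIndependent_iff]
    intro g hg
    simp only [Fin.sum_univ_three, cons_val] at hg
    have hg0 : g 0 = 0 := by simpa [hψv, hψu, hψw] using congrArg ψ hg
    have hg2 : g 2 = 0 := by simpa [hφv, hφu, hφw] using congrArg φ hg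
    have hg1 : g 1 = 0 := by simpa [hg0, hg2, hu0] using hg
    intro i
    fin_cases i <;> assumption
  let b := basisOfLinearIndependentOfCardEqFinrank h_indep (by simp [hV])
  have hb : ⇑b = ![v, u, w] := coe_basisOfLinearIndependentOfCardEqFinrank _ _
  refine ⟨b, by simp [hb], by simp [hb], b.ext fun i => ?_, b.ext fun i => ?_⟩
  · rw [b.coord_apply, b.repr_self]
    fin_cases i <;> simp [hb, hψv, hψu, hψw]
  · rw [b.coord_apply, b.repr_self]
    fin_cases i <;> simp [hb, hφv, hφu, hφw]

/-- The Lie algebra of the matrices by which a Lie algebra acts on a Lie module with a given basis.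
It makes matrix computations available for representations on abstract vector spaces. -/
noncomputable def matrixRange {ι : Type*} [Fintype ι] [DecidableEq ι] (L : Type*) [LieRing L]
    [LieAlgebra F L] [LieRingModule L V] [LieModule F L V] (b : Basis ι F V) :
    LieSubalgebra F (Matrix ι ι F) :=
  ((LinearMap.toMatrixAlgEquiv b).toAlgHom.toLieHom.comp (toEnd F L V)).range

section MatrixRange

variable {ι : Type*} [Fintype ι] [DecidableEq ι] {b : Basis ι F V}

theorem mem_matrixRange {X : Matrix ι ι F} :
    X ∈ matrixRange L b ↔ ∃ x : L, LinearMap.toMatrixAlgEquiv b (toEnd F L V x) = X :=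
  Iff.rfl

theorem single_mem_matrixRange {i j : ι} {x : L} (hx : ∀ m, ⁅x, m⁆ = b.coord j m • b i) :
    single i j 1 ∈ matrixRange L b := by
  refine mem_matrixRange.2 ⟨x, ?_⟩
  ext k l
  by_cases hl : l = j <;>
    simp [LinearMap.toMatrixAlgEquiv_apply, hx, single_apply, Finsupp.single_apply, hl, Ne.symm]

theorem exists_mem_matrixRange_apply_ne_zero [IsIrreducible F L V] {s : Set ι}
    (h_nonempty : s.Nonempty) (h_univ : s ≠ Set.univ) :
    ∃ X ∈ matrixRange L b, ∃ i ∉ s, ∃ j ∈ s, X i j ≠ 0 := by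
  obtain ⟨j₀, hj₀⟩ := h_nonempty
  obtain ⟨i₀, hi₀⟩ := (Set.ne_univ_iff_exists_notMem s).1 h_univ
  let W := Submodule.span F (b '' s)
  have h_bot : W ≠ ⊥ := (Submodule.ne_bot_iff W).2
    ⟨b j₀, Submodule.subset_span (Set.mem_image_of_mem b hj₀), b.ne_zero j₀⟩
  have h_top : W ≠ ⊤ := fun h =>
    b.linearIndependent.notMem_span_image hi₀ (h ▸ Submodule.mem_top : b i₀ ∈ W)
  by_contra! h_zero
  obtain ⟨x, m, hm, hx⟩ := exists_lie_notMem_of_isIrreducible (L := L) h_bot h_top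
  refine hx ((Submodule.span_le.2 ?_ : W ≤ W.comap (toEnd F L V x)) hm)
  rintro _ ⟨j, hj, rfl⟩
  refine b.mem_span_image.2 fun i hi => ?_
  by_contra h_notMem
  have h_entry := h_zero _ (mem_matrixRange.2 ⟨x, rfl⟩) i h_notMem j hj
  rw [LinearMap.toMatrixAlgEquiv_apply] at h_entry
  exact Finsupp.mem_support_iff.1 hi h_entry

end MatrixRange

theorem exists_raisingMatrix_mem_matrixRange [IsIrreducible F L V] {b : Basis (Fin 3) F V}
    (hE : single 0 2 1 ∈ matrixRange L b) (hF : single 2 0 1 ∈ matrixRange L b) :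
    ∃ a c : F, a ≠ 0 ∧ c ≠ 0 ∧ raisingMatrix a c ∈ matrixRange L b := by
  obtain ⟨a₁, c₁, ha₁, h₁⟩ : ∃ a c : F, a ≠ 0 ∧ raisingMatrix a c ∈ matrixRange L b := by
    obtain ⟨X, hX, i, hi, j, rfl, hij⟩ := exists_mem_matrixRange_apply_ne_zero
      (L := L) (b := b) (Set.singleton_nonempty 1) (Set.singleton_ne_univ 1)
    have h_upper := raisingMatrix_upper_entries_mem hE hF hX
    have h_lower := raisingMatrix_lower_entries_mem hE hF hX
    fin_cases i
    · exact ⟨_, _, hij, h_upper⟩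
    · exact absurd rfl hi
    · exact ⟨_, _, hij, h_lower⟩
  obtain ⟨a₂, c₂, hc₂, h₂⟩ : ∃ a c : F, c ≠ 0 ∧ raisingMatrix a c ∈ matrixRange L b := by
    obtain ⟨X, hX, i, hi, j, hj, hij⟩ := exists_mem_matrixRange_apply_ne_zero
      (L := L) (b := b) (s := {1}ᶜ) ⟨0, by simp⟩ (by simp)
    obtain rfl : i = 1 := by simpa using hi
    have h_upper := raisingMatrix_upper_entries_mem hE hF hX
    have h_lower := raisingMatrix_lower_entries_mem hE hF hX
    fin_cases j
    · exact ⟨_, _, neg_ne_zero.2 hij, h_lower⟩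
    · exact absurd rfl hj
    · exact ⟨_, _, hij, h_upper⟩
  by_cases hc₁ : c₁ = 0
  · by_cases ha₂ : a₂ = 0
    · refine ⟨a₁, c₂, ha₁, hc₂, ?_⟩
      convert add_mem h₁ h₂ using 1
      simp [raisingMatrix, hc₁, ha₂]
    · exact ⟨a₂, c₂, ha₂, hc₂, h₂⟩
  · exact ⟨a₁, c₁, ha₁, hc₁, h₁⟩

theorem mem_range_toEnd_of_trace_eq_zero [IsIrreducible F L V] (h2 : (2 : F) ≠ 0)
    (h3 : (3 : F) ≠ 0) (hV : finrank F V = 3) (he : ∀ m, ⁅e, m⁆ = φ m • v) (hv : v ≠ 0)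
    (hφ : φ ≠ 0) (hφv : φ v = 0) {T : End F V} (hT : LinearMap.trace F V T = 0) :
    T ∈ (toEnd F L V).range := by
  obtain ⟨x, hx⟩ := exists_dual_lie_ne_zero h2 h3 hV he hv hφ hφv
  obtain ⟨f, w, ψ, hf, hφw, hψv, hψw⟩ := exists_opposite_rankOne h2 h3 he hφv hx
  obtain ⟨b, rfl, rfl, rfl, rfl⟩ := exists_basis_of_dual_pair hV hφv hφw hψv hψw
  have hE : single 0 2 1 ∈ matrixRange L b := single_mem_matrixRange he
  have hF : single 2 0 1 ∈ matrixRange L b := single_mem_matrixRange hf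
  obtain ⟨a, c, ha, hc, hac⟩ := exists_raisingMatrix_mem_matrixRange hE hF
  have h_trace : (LinearMap.toMatrixAlgEquiv b T).trace = 0 := by
    rw [← hT, LinearMap.trace_eq_matrix_trace F b]
    rfl
  obtain ⟨y, hy⟩ := mem_matrixRange.1 <| mem_of_trace_eq_zero_of_raisingMatrix_mem hE hF
    (raisingMatrix_mem_of_ne_zero h2 h3 hF ha hc hac) h_trace
  exact ⟨y, (LinearMap.toMatrixAlgEquiv b).injective hy⟩

end Representation

theorem proper_subalgebra_of_sl3_containing_E13_reducible_general {F : Type*} [Field F]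
    (h2 : (2 : F) ≠ 0) (h3 : (3 : F) ≠ 0) (J : LieSubalgebra F (Matrix (Fin 3) (Fin 3) F))
    {v φ : Fin 3 → F} (hv : v ≠ 0) (hφ : φ ≠ 0) (hφv : φ ⬝ᵥ v = 0) (he : vecMulVec v φ ∈ J)
    (hproper : ∃ X : Matrix (Fin 3) (Fin 3) F, X.trace = 0 ∧ X ∉ J) :
    ∃ W : Submodule F (Fin 3 → F), W ≠ ⊥ ∧ W ≠ ⊤ ∧ ∀ X ∈ J, ∀ w ∈ W, X.mulVec w ∈ W := by
  by_contra! h_reducible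
  have : IsIrreducible F J (Fin 3 → F) := .mk fun N hN => by
    by_contra h_top
    obtain ⟨X, hX, w, hw, h_notMem⟩ := h_reducible N.toSubmodule (by simpa) (by simpa)
    exact h_notMem (N.lie_mem (x := ⟨X, hX⟩) hw)
  obtain ⟨X, hX, h_notMem⟩ := hproper
  obtain ⟨Y, hY⟩ := mem_range_toEnd_of_trace_eq_zero (L := J) (e := ⟨_, he⟩)
    (φ := dotProductBilin F F φ) h2 h3 (by simp)
    (fun m => by simp [vecMulVec_mulVec]) hv
    (fun h => hφ (dotProduct_eq_zero φ (DFunLike.congr_fun h))) hφv (T := toLin' X) (by simpa)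
  refine h_notMem ?_
  convert Y.2
  exact toLin'.injective hY.symm

/-- Over an algebraically closed field of characteristic zero, any proper Lie
subalgebra of `sl₃` containing the rank-one nilpotent `E₁₃` acts reducibly on
`F³`, i.e. preserves a nontrivial proper subspace. -/
theorem proper_subalgebra_of_sl3_containing_E13_reducible
    (F : Type*) [Field F] [IsAlgClosed F] [CharZero F]
    (J : Submodule F (Matrix (Fin 3) (Fin 3) F))
    (htr : ∀ X ∈ J, Matrix.trace X = 0)
    (hbr : ∀ X ∈ J, ∀ Y ∈ J, X * Y - Y * X ∈ J)
    (hE : Matrix.single (0 : Fin 3) (2 : Fin 3) (1 : F) ∈ J)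
    (hproper : ∃ X : Matrix (Fin 3) (Fin 3) F, Matrix.trace X = 0 ∧ X ∉ J) :
    ∃ W : Submodule F (Fin 3 → F), W ≠ ⊥ ∧ W ≠ ⊤ ∧
      ∀ X ∈ J, ∀ w ∈ W, X.mulVec w ∈ W := by
  rw [single_eq_single_vecMulVec_single] at hE
  exact proper_subalgebra_of_sl3_containing_E13_reducible_general two_ne_zero three_ne_zero
    { J with lie_mem' := fun hX hY => hbr _ hX _ hY } (by simp) (by simp) (by simp) hE hproper
end

section
/- For every real number C > 0 there exists D₀ > 0 such that every totally real cubic number field K (a number field with [K:ℚ] = 3 all of whose infinite places are real) whose absolute discriminant satisfies |disc(K)| ≥ D₀ has regulator greater than C. In other words, the regulator of a totally real cubic field tends to infinity as its discriminant tends to infinity. -/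
open NumberField

/-! By Minkowski's theorem for the unit lattice, a number field `K` of positive unit rank has a
non-torsion unit `u` whose logarithmic embedding is bounded in terms of the regulator, so that all
conjugates of `u` are bounded as well. Rational units are torsion, so if there is no field strictly
between `ℚ` and `K`, then `u` generates `K`. The discriminant of `K` divides that of the power basis
of `u`, which is a product of differences of conjugates of `u`: a bounded regulator forces a bounded
discriminant. -/

open MeasureTheory Module IntermediateField
open NumberField.Units NumberField.Units.dirichletUnitTheorem

section Minkowski

variable {ι : Type*} [Fintype ι] [Nonempty ι]

theorem exists_ne_zero_mem_norm_pow_card_le_covolume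
    (L : Submodule ℤ (ι → ℝ)) [DiscreteTopology L] [IsZLattice ℝ L] :
    ∃ x ∈ L, x ≠ 0 ∧ ‖x‖ ^ Fintype.card ι ≤ ZLattice.covolume L := by
  have hcard : Fintype.card ι ≠ 0 := Fintype.card_ne_zero
  have hcov : 0 ≤ ZLattice.covolume L := (ZLattice.covolume_pos L volume).le
  let r : ℝ := ZLattice.covolume L ^ (Fintype.card ι : ℝ)⁻¹
  have hr_pow : r ^ Fintype.card ι = ZLattice.covolume L := Real.rpow_inv_natCast_pow hcov hcard
  have hr_nonneg : 0 ≤ r := Real.rpow_nonneg hcov _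
  let b := Free.chooseBasis ℤ L
  have fund := ZLattice.isAddFundamentalDomain b (volume : Measure (ι → ℝ))
  set F := ZSpan.fundamentalDomain (b.ofZLatticeBasis ℝ L)
  have hvol : volume F = ENNReal.ofReal (ZLattice.covolume L) := by
    have hfinite : volume F ≠ ⊤ := (ZSpan.fundamentalDomain_isBounded _).measure_lt_top.ne
    rw [ZLattice.covolume_eq_measure_fundamentalDomain L volume fund, ofReal_measureReal hfinite]
  have hle : volume F * 2 ^ finrank ℝ (ι → ℝ) ≤ volume (Metric.closedBall (0 : ι → ℝ) r) := by
    rw [Real.volume_pi_closedBall _ hr_nonneg, hvol, finrank_fintype_fun_eq_card, mul_pow, hr_pow,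
      mul_comm, ENNReal.ofReal_mul (by positivity), ENNReal.ofReal_pow zero_le_two,
      ENNReal.ofReal_ofNat]
  have : Countable L.toAddSubgroup := inferInstanceAs (Countable L)
  have : DiscreteTopology L.toAddSubgroup := inferInstanceAs (DiscreteTopology L)
  obtain ⟨⟨x, hxL⟩, hx0, hx⟩ := exists_ne_zero_mem_lattice_of_measure_mul_two_pow_le_measure
    (L := L.toAddSubgroup) fund (fun x hx ↦ by simpa using hx) (convex_closedBall _ _)
    (isCompact_closedBall _ _) hle
  refine ⟨x, hxL, fun h ↦ hx0 (Subtype.ext h), ?_⟩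
  rw [← hr_pow]
  exact pow_le_pow_left₀ (norm_nonneg x) (mem_closedBall_zero_iff.1 hx) _

end Minkowski

section NumberField

variable {K : Type*} [Field K] [NumberField K]

theorem card_infinitePlace_le_finrank : Fintype.card (InfinitePlace K) ≤ finrank ℚ K := by
  have := InfinitePlace.card_eq_nrRealPlaces_add_nrComplexPlaces K
  have := InfinitePlace.card_add_two_mul_card_eq_rank K
  lia

theorem unitRank_ne_zero_of_two_lt_finrank (h : 2 < finrank ℚ K) : rank K ≠ 0 := by
  have := InfinitePlace.card_eq_nrRealPlaces_add_nrComplexPlaces K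
  have := InfinitePlace.card_add_two_mul_card_eq_rank K
  rw [rank]
  lia

open scoped Classical in
theorem exists_notMem_torsion_norm_logEmbedding_pow_le_regulator (hK : rank K ≠ 0) :
    ∃ u : (𝓞 K)ˣ, u ∉ torsion K ∧
      ‖logEmbedding K (Additive.ofMul u)‖ ^ rank K ≤ regulator K := by
  have hcard : Fintype.card {w : InfinitePlace K // w ≠ w₀} = rank K := by
    rw [← Units.finrank_eq_rank, finrank_fintype_fun_eq_card]
  have : Nonempty {w : InfinitePlace K // w ≠ w₀} := Fintype.card_pos_iff.1 (by lia)
  obtain ⟨_, ⟨u, -, rfl⟩, hu0, hu⟩ := exists_ne_zero_mem_norm_pow_card_le_covolume (unitLattice K)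
  rw [hcard] at hu
  exact ⟨u.toMul, fun h ↦ hu0 (logEmbedding_eq_zero_iff.2 h), hu⟩

open scoped Classical in
theorem house_le_exp_finrank_mul_norm_logEmbedding (u : (𝓞 K)ˣ) :
    house (u : K) ≤ Real.exp (finrank ℚ K * ‖logEmbedding K (Additive.ofMul u)‖) := by
  refine (pi_norm_le_iff_of_nonneg (Real.exp_nonneg _)).2 fun φ ↦ ?_
  rw [canonicalEmbedding.apply_at, ← InfinitePlace.apply,
    ← Real.log_le_iff_le_exp (pos_at_place u _)]
  calc Real.log (InfinitePlace.mk φ (u : K))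
      ≤ |Real.log (InfinitePlace.mk φ (u : K))| := le_abs_self _
    _ ≤ Fintype.card (InfinitePlace K) * ‖logEmbedding K (Additive.ofMul u)‖ :=
        log_le_of_logEmbedding_le (norm_nonneg _) le_rfl _
    _ ≤ finrank ℚ K * ‖logEmbedding K (Additive.ofMul u)‖ := by
        gcongr
        exact card_infinitePlace_le_finrank

theorem mem_torsion_of_mem_bot {u : (𝓞 K)ˣ} (hu : (u : K) ∈ (⊥ : IntermediateField ℚ K)) :
    u ∈ torsion K := by
  obtain ⟨q, hq⟩ := mem_bot.1 hu
  have hnorm : |q| ^ finrank ℚ K = 1 := by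
    rw [← abs_pow, ← Algebra.norm_algebraMap, hq, Units.norm]
  have hq1 : |q| = 1 := (pow_eq_one_iff_of_nonneg (abs_nonneg q) finrank_pos.ne').1 hnorm
  refine (mem_torsion K).2 fun w ↦ ?_
  rw [← hq, ← InfinitePlace.norm_embedding_eq, eq_ratCast, map_ratCast, Complex.norm_ratCast]
  exact_mod_cast hq1

theorem adjoin_simple_eq_top_of_notMem_torsion [IsSimpleOrder (IntermediateField ℚ K)]
    {u : (𝓞 K)ˣ} (hu : u ∉ torsion K) : ℚ⟮(u : K)⟯ = ⊤ :=
  (eq_bot_or_eq_top _).resolve_left fun h ↦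
    hu (mem_torsion_of_mem_bot (h ▸ mem_adjoin_simple_self ℚ (u : K)))

theorem abs_discr_le_abs_discr_of_isIntegral {ι : Type*} [Fintype ι] [DecidableEq ι]
    (b : Basis ι ℚ K) (hb : ∀ i, IsIntegral ℤ (b i)) :
    (|discr K| : ℚ) ≤ |Algebra.discr ℚ b| := by
  let c : Basis ι ℚ K := (integralBasis K).reindex ((integralBasis K).indexEquiv b)
  have hc : Algebra.discr ℚ c = discr K := by
    rw [Basis.coe_reindex, Algebra.discr_reindex, coe_discr]
  have hdiscr : Algebra.discr ℚ b = (c.toMatrix b).det ^ 2 * discr K := by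
    rw [← hc, ← Algebra.discr_of_matrix_vecMul, Basis.toMatrix_map_vecMul]
  have hint : IsIntegral ℤ (c.toMatrix b).det := by
    refine IsIntegral.det fun i j ↦ ?_
    rw [Basis.toMatrix_apply, Basis.repr_reindex_apply]
    exact (integralBasis_repr_apply K ⟨b j, hb j⟩ _) ▸ isIntegral_algebraMap
  obtain ⟨m, hm⟩ := IsIntegrallyClosed.isIntegral_iff.1 hint
  rw [← hm, eq_intCast] at hdiscr
  have hm0 : m ≠ 0 := by
    rintro rfl
    exact Algebra.discr_not_zero_of_basis ℚ b (by simpa using hdiscr)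
  have hm1 : (1 : ℚ) ≤ (m : ℚ) ^ 2 := by exact_mod_cast Int.add_one_le_of_lt (sq_pos_of_ne_zero hm0)
  rw [hdiscr, abs_mul, abs_of_nonneg (sq_nonneg (m : ℚ))]
  exact le_mul_of_one_le_left (abs_nonneg _) hm1

theorem abs_discr_powerBasis_le (pb : PowerBasis ℚ K) :
    (|Algebra.discr ℚ pb.basis| : ℝ) ≤ (2 * house pb.gen) ^ (pb.dim * (pb.dim - 1)) := by
  have e : Fin pb.dim ≃ (K →ₐ[ℚ] ℂ) :=
    Fintype.equivOfCardEq (by rw [Fintype.card_fin, AlgHom.card, pb.finrank])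
  let d (j i : Fin pb.dim) : ℝ := ‖e j pb.gen - e i pb.gen‖
  have hd (j i) : d j i ≤ 2 * house pb.gen := by
    rw [two_mul]
    exact (norm_sub_le _ _).trans <| add_le_add
      (norm_embedding_le_house pb.gen (e j).toRingHom)
      (norm_embedding_le_house pb.gen (e i).toRingHom)
  calc (|Algebra.discr ℚ pb.basis| : ℝ)
      = ‖algebraMap ℚ ℂ (Algebra.discr ℚ pb.basis)‖ := by
        rw [eq_ratCast, Complex.norm_ratCast]
    _ = ∏ i, ∏ j ∈ Finset.Ioi i, d j i * d i j := by
        simp only [Algebra.discr_powerBasis_eq_prod' ℚ ℂ pb e, norm_prod, norm_neg, norm_mul, d]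
    _ = ∏ i, ∏ j ∈ {i}ᶜ, d j i := Finset.prod_prod_Ioi_mul_eq_prod_prod_off_diag d
    _ ≤ ∏ i : Fin pb.dim, ∏ _j ∈ ({i}ᶜ : Finset (Fin pb.dim)), 2 * house pb.gen := by
        gcongr
        exact hd _ _
    _ = (2 * house pb.gen) ^ (pb.dim * (pb.dim - 1)) := by
        simp [Finset.card_compl, ← pow_mul, mul_comm]

theorem abs_discr_le_two_mul_house_pow {α : K} (hα : IsIntegral ℤ α) (htop : ℚ⟮α⟯ = ⊤) :
    (|discr K| : ℝ) ≤ (2 * house α) ^ (finrank ℚ K * (finrank ℚ K - 1)) := by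
  have hαQ : IsIntegral ℚ α := hα.tower_top
  let pb : PowerBasis ℚ K :=
    .ofAdjoinEqTop hαQ ((adjoin_simple_eq_top_iff_of_isAlgebraic hαQ.isAlgebraic).1 htop)
  have hpb : ∀ i, IsIntegral ℤ (pb.basis i) := fun i ↦ by
    simpa only [PowerBasis.coe_basis, pb, PowerBasis.ofAdjoinEqTop_gen] using hα.pow (i : ℕ)
  rw [pb.finrank]
  calc (|discr K| : ℝ)
      ≤ |(Algebra.discr ℚ pb.basis : ℝ)| := by
        exact_mod_cast abs_discr_le_abs_discr_of_isIntegral pb.basis hpb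
    _ ≤ (2 * house pb.gen) ^ (pb.dim * (pb.dim - 1)) := abs_discr_powerBasis_le pb

theorem abs_discr_le_two_mul_exp_regulator_pow [IsSimpleOrder (IntermediateField ℚ K)]
    (hK : rank K ≠ 0) :
    (|discr K| : ℝ) ≤
      (2 * Real.exp (finrank ℚ K * max 1 (regulator K))) ^ (finrank ℚ K * (finrank ℚ K - 1)) := by
  classical
  obtain ⟨u, hu, hpow⟩ := exists_notMem_torsion_norm_logEmbedding_pow_le_regulator hK
  have hlog : ‖logEmbedding K (Additive.ofMul u)‖ ≤ max 1 (regulator K) :=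
    le_max_iff.2 <| (le_total _ _).imp_right fun h ↦ (le_self_pow₀ h hK).trans hpow
  have hhouse : house (u : K) ≤ Real.exp (finrank ℚ K * max 1 (regulator K)) :=
    (house_le_exp_finrank_mul_norm_logEmbedding u).trans (by gcongr)
  calc (|discr K| : ℝ)
      ≤ (2 * house (u : K)) ^ (finrank ℚ K * (finrank ℚ K - 1)) :=
        abs_discr_le_two_mul_house_pow (RingOfIntegers.isIntegral_coe _)
          (adjoin_simple_eq_top_of_notMem_torsion hu)
    _ ≤ _ := by
        have := house_nonneg (u : K)
        gcongr

end NumberField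

theorem regulator_totally_real_cubic_tendsto_infty_general (n : ℕ) (C : ℝ) :
    ∃ D₀ : ℝ, 0 < D₀ ∧
      ∀ (K : Type*) [Field K] [NumberField K] [IsSimpleOrder (IntermediateField ℚ K)],
        finrank ℚ K = n →
        rank K ≠ 0 →
        D₀ ≤ |(discr K : ℝ)| →
        C < regulator K := by
  refine ⟨(2 * Real.exp (n * max 1 C)) ^ (n * (n - 1)) + 1, by positivity, ?_⟩
  rintro K _ _ _ rfl hrank hD
  by_contra! hreg
  have hdiscr : (|discr K| : ℝ) ≤
      (2 * Real.exp (finrank ℚ K * max 1 C)) ^ (finrank ℚ K * (finrank ℚ K - 1)) :=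
    (abs_discr_le_two_mul_exp_regulator_pow hrank).trans (by gcongr)
  linarith

/-- The regulator of a totally real cubic number field tends to infinity with
the absolute discriminant: for every `C > 0` there is `D₀ > 0` such that every
totally real cubic field of absolute discriminant at least `D₀` has regulator
greater than `C`. -/
theorem regulator_totally_real_cubic_tendsto_infty (C : ℝ) (hC : 0 < C) :
    ∃ D₀ : ℝ, 0 < D₀ ∧
      ∀ (K : Type) [Field K] [NumberField K],
        (∀ v : InfinitePlace K, v.IsReal) →
        Module.finrank ℚ K = 3 →
        D₀ ≤ |(discr K : ℝ)| →
        C < Units.regulator K := by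
  obtain ⟨D₀, hD₀, h⟩ := regulator_totally_real_cubic_tendsto_infty_general 3 C
  refine ⟨D₀, hD₀, fun K _ _ _ h3 ↦ ?_⟩
  have := isSimpleOrder_of_finrank_prime ℚ K (h3 ▸ Nat.prime_three)
  exact h K h3 (unitRank_ne_zero_of_two_lt_finrank (by lia))
end
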